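/- If g1, g2 ∈ Ree(q) have orders coprime to 3 and the traces of g1 and g2 (as 7×7 matrices over F_q) are equal, then g1 and g2 are conjugate in Ree(q). -/

import Mathlib

open Matrix


noncomputable section

namespace ReePaper

variable {F : Type*} [Field F] [Fintype F]

/-- The matrix `α(x)`. -/
def amat (t : ℕ) (x : F) : Matrix (Fin 7) (Fin 7) F :=
  !![1, x^t, 0, 0, -x^(3*t+1), -x^(3*t+2), x^(4*t+2);
     0, 1, x, x^(t+1), -x^(2*t+1), 0, -x^(3*t+2);
     0, 0, 1, x^t, -x^(2*t), 0, x^(3*t+1);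
     0, 0, 0, 1, x^t, 0, 0;
     0, 0, 0, 0, 1, -x, x^(t+1);
     0, 0, 0, 0, 0, 1, -x^t;
     0, 0, 0, 0, 0, 0, 1]

/-- The matrix `β(x)`. -/
def bmat (t : ℕ) (x : F) : Matrix (Fin 7) (Fin 7) F :=
  !![1, 0, -x^t, 0, -x, 0, -x^(t+1);
     0, 1, 0, x^t, 0, -x^(2*t), 0;
     0, 0, 1, 0, 0, 0, x;
     0, 0, 0, 1, 0, x^t, 0;
     0, 0, 0, 0, 1, 0, x^t;
     0, 0, 0, 0, 0, 1, 0;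
     0, 0, 0, 0, 0, 0, 1]

/-- The matrix `γ(x)`. -/
def cmat (t : ℕ) (x : F) : Matrix (Fin 7) (Fin 7) F :=
  !![1, 0, 0, -x^t, 0, -x, -x^(2*t);
     0, 1, 0, 0, -x^t, 0, x;
     0, 0, 1, 0, 0, x^t, 0;
     0, 0, 0, 1, 0, 0, -x^t;
     0, 0, 0, 0, 1, 0, 0;
     0, 0, 0, 0, 0, 1, 0;
     0, 0, 0, 0, 0, 0, 1]

/-- The diagonal matrix `h(λ)`. -/
def hmat (t : ℕ) (l : Fˣ) : Matrix (Fin 7) (Fin 7) F :=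
  Matrix.diagonal ![((l ^ (t : ℤ) : Fˣ) : F), ((l ^ (1 - (t : ℤ)) : Fˣ) : F),
    ((l ^ (2 * (t : ℤ) - 1) : Fˣ) : F), 1, ((l ^ (1 - 2 * (t : ℤ)) : Fˣ) : F),
    ((l ^ ((t : ℤ) - 1) : Fˣ) : F), ((l ^ (-(t : ℤ)) : Fˣ) : F)]

/-- The matrix `Υ`, the antidiagonal matrix with all entries `-1`. -/
def ups : Matrix (Fin 7) (Fin 7) F :=
  !![0, 0, 0, 0, 0, 0, -1;
     0, 0, 0, 0, 0, -1, 0;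
     0, 0, 0, 0, -1, 0, 0;
     0, 0, 0, -1, 0, 0, 0;
     0, 0, -1, 0, 0, 0, 0;
     0, -1, 0, 0, 0, 0, 0;
     -1, 0, 0, 0, 0, 0, 0]

/-- `S(a, b, c) = α(a) β(b) γ(c)`. -/
def Smat (t : ℕ) (a b c : F) : Matrix (Fin 7) (Fin 7) F :=
  amat t a * bmat t b * cmat t c

/-- The Ree group `Ree(q) = ⟨α(x), β(x), γ(x), h(λ), Υ⟩ ≤ GL(7, q)`. -/
def ReeGroup (t : ℕ) : Subgroup (GL (Fin 7) F) :=
  Subgroup.closure {g : GL (Fin 7) F |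
    (∃ x : F, (g : Matrix (Fin 7) (Fin 7) F) = amat t x) ∨
    (∃ x : F, (g : Matrix (Fin 7) (Fin 7) F) = bmat t x) ∨
    (∃ x : F, (g : Matrix (Fin 7) (Fin 7) F) = cmat t x) ∨
    (∃ l : Fˣ, (g : Matrix (Fin 7) (Fin 7) F) = hmat t l) ∨
    (g : Matrix (Fin 7) (Fin 7) F) = ups}

/-- The subgroup `U(q) = ⟨α(x), β(x), γ(x)⟩`. -/
def Usub (t : ℕ) : Subgroup (GL (Fin 7) F) :=
  Subgroup.closure {g : GL (Fin 7) F |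
    (∃ x : F, (g : Matrix (Fin 7) (Fin 7) F) = amat t x) ∨
    (∃ x : F, (g : Matrix (Fin 7) (Fin 7) F) = bmat t x) ∨
    (∃ x : F, (g : Matrix (Fin 7) (Fin 7) F) = cmat t x)}

/-- The subgroup `H(q) = {h(λ) : λ ∈ F_q^×}`. -/
def Hsub (t : ℕ) : Subgroup (GL (Fin 7) F) :=
  Subgroup.closure {g : GL (Fin 7) F |
    ∃ l : Fˣ, (g : Matrix (Fin 7) (Fin 7) F) = hmat t l}

end ReePaper

open ReePaper

/-!
In characteristic three the algebraic group `G₂` has an exceptional isogeny whose square is the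
Frobenius map, and the Ree group consists of the elements `g` of `G₂` whose image under the isogeny
is `g` twisted by `x ↦ x ^ 3 ^ (m + 1)`.  Here `G₂` acts on `K⁷` by automorphisms of the product of
imaginary octonions, which in characteristic three is a Lie bracket; the isogeny is the action of
these automorphisms on the derivations modulo the inner ones.

Over the algebraic closure an element of order prime to three is conjugate to an element of a
maximal torus.  Its trace `τ`, together with the trace of its image under the isogeny, which is
`τ ^ 3 ^ (m + 1)`, determines the torus element up to the Weyl group.  Hence two elements of the
Ree group with the same trace `τ` are conjugate in `G₂`.  If `τ ≠ 1` and `τ ≠ -1`, the weights of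
the torus element are distinct, and correcting the conjugating element by a solution of a monomial
equation in the torus, as in Lang's theorem, makes it a fixed point of the twisted isogeny, that is,
an element of the Ree group.  The trace `1` belongs to the identity only and the trace `-1` to the
involutions; these are conjugated into the normalizer of the torus by means of the action on the
Ree–Tits ovoid.
-/

namespace ReePaper

variable {K : Type*} [Field K]

/-- The standard basis vectors of `K⁷`, indexed from `0`; the weight of `e i` and that of
`e (Fin.rev i)` are opposite. -/
abbrev e (i : Fin 7) : Fin 7 → K := Pi.single i 1

/-- The alternating product on `K⁷`, the imaginary octonions in a basis of weight vectors.  In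
characteristic `3` it is a Lie bracket, and the maps `cross w` form the ideal of short roots of the
Lie algebra of type `G₂`. -/
def cross : (Fin 7 → K) →ₗ[K] (Fin 7 → K) →ₗ[K] (Fin 7 → K) :=
  LinearMap.mk₂ K (fun u v => ![
      u 0 * v 3 - u 3 * v 0 + u 1 * v 2 - u 2 * v 1,
      u 0 * v 4 - u 4 * v 0 + u 3 * v 1 - u 1 * v 3,
      u 5 * v 0 - u 0 * v 5 + u 3 * v 2 - u 2 * v 3,
      u 0 * v 6 - u 6 * v 0 + u 5 * v 1 - u 1 * v 5 + u 4 * v 2 - u 2 * v 4,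
      u 6 * v 1 - u 1 * v 6 + u 4 * v 3 - u 3 * v 4,
      u 2 * v 6 - u 6 * v 2 + u 5 * v 3 - u 3 * v 5,
      u 3 * v 6 - u 6 * v 3 + u 4 * v 5 - u 5 * v 4])
    (fun u u' v => by ext i; fin_cases i <;> simp <;> ring)
    (fun a u v => by ext i; fin_cases i <;> simp <;> ring)
    (fun u v v' => by ext i; fin_cases i <;> simp <;> ring)
    (fun a u v => by ext i; fin_cases i <;> simp <;> ring)

/-- `outer c` is a derivation of `cross` (in characteristic `3`) representing the class `c` modulo
the ideal of inner derivations `cross w`.  The quotient is the second 7-dimensional representation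
of `G₂`, with the same weights up to the exchange of long and short roots. -/
def outer : (Fin 7 → K) →ₗ[K] (Fin 7 → K) →ₗ[K] (Fin 7 → K) :=
  LinearMap.mk₂ K (fun c v => ![
      c 1 * v 4 + c 0 * v 5,
      -(c 3 * v 1) - c 2 * v 2 - c 0 * v 6,
      c 3 * v 2 - c 4 * v 1 - c 1 * v 6,
      0,
      c 5 * v 0 - c 3 * v 4 + c 2 * v 5,
      c 6 * v 0 + c 4 * v 4 + c 3 * v 5,
      -(c 6 * v 1) - c 5 * v 2])
    (fun u u' v => by ext i; fin_cases i <;> simp <;> ring)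
    (fun a u v => by ext i; fin_cases i <;> simp <;> ring)
    (fun u v v' => by ext i; fin_cases i <;> simp <;> ring)
    (fun a u v => by ext i; fin_cases i <;> simp <;> ring)

/-- The quadratic form of the imaginary octonions, as a symmetric bilinear form. -/
def form : LinearMap.BilinForm K (Fin 7 → K) :=
  LinearMap.mk₂ K (fun u v => u 0 * v 6 + u 1 * v 5 + u 2 * v 4 - u 3 * v 3 + u 4 * v 2
      + u 5 * v 1 + u 6 * v 0)
    (fun u u' v => by simp; ring) (fun a u v => by simp; ring)
    (fun u v v' => by simp; ring) (fun a u v => by simp; ring)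

theorem cross_cross_self [CharP K 3] (u w : Fin 7 → K) :
    cross u (cross u w) = form u w • u - form u u • w := by
  ext i
  fin_cases i <;> simp [cross, form] <;> grind

/-- The matrix `α(x)` of the Ree group with `x ^ t` replaced by an independent parameter `X`. -/
def alpha (x X : K) : Matrix (Fin 7) (Fin 7) K :=
  !![1, X, 0, 0, -(X^3*x), -(X^3*x^2), X^4*x^2;
     0, 1, x, X*x, -(X^2*x), 0, -(X^3*x^2);
     0, 0, 1, X, -X^2, 0, X^3*x;
     0, 0, 0, 1, X, 0, 0;
     0, 0, 0, 0, 1, -x, X*x;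
     0, 0, 0, 0, 0, 1, -X;
     0, 0, 0, 0, 0, 0, 1]

theorem alpha_mulVec (x X : K) (v : Fin 7 → K) : alpha x X *ᵥ v = ![
    v 0 + X * v 1 - X^3 * x * v 4 - X^3*x^2 * v 5 + X^4*x^2 * v 6,
    v 1 + x * v 2 + X * x * v 3 - X^2*x * v 4 - X^3*x^2 * v 6,
    v 2 + X * v 3 - X^2 * v 4 + X^3 * x * v 6,
    v 3 + X * v 4,
    v 4 - x * v 5 + X * x * v 6,
    v 5 - X * v 6,
    v 6] := by
  ext i
  fin_cases i <;> simp [alpha, Matrix.mulVec, dotProduct, Fin.sum_univ_seven] <;> ring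

theorem alpha_cross [CharP K 3] (x X : K) (u v : Fin 7 → K) :
    alpha x X *ᵥ cross u v = cross (alpha x X *ᵥ u) (alpha x X *ᵥ v) := by
  simp only [alpha_mulVec]
  ext i
  fin_cases i <;> simp [cross] <;> grind

theorem alpha_outer [CharP K 3] (x X : K) (c v : Fin 7 → K) :
    alpha x X *ᵥ outer c v = outer (alpha (X^3) x *ᵥ c) (alpha x X *ᵥ v) +
      cross ![X^2*c 2 + X^5*c 5*x^2, -X*c 2 + X*c 3*x + X^4*c 5*x^2, X*c 3 - X^4*c 5*x,
        X^3*c 5*x + X^3*c 6*x^2, X^2*c 5*x, -X^2*c 5, -X*c 5] (alpha x X *ᵥ v) := by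
  simp only [alpha_mulVec]
  ext i
  fin_cases i <;> simp [cross, outer] <;> grind

/-- The matrix `β(x)` of the Ree group with `x ^ t` replaced by an independent parameter `X`. -/
def beta (x X : K) : Matrix (Fin 7) (Fin 7) K :=
  !![1, 0, -X, 0, -x, 0, -(X*x);
     0, 1, 0, X, 0, -X^2, 0;
     0, 0, 1, 0, 0, 0, x;
     0, 0, 0, 1, 0, X, 0;
     0, 0, 0, 0, 1, 0, X;
     0, 0, 0, 0, 0, 1, 0;
     0, 0, 0, 0, 0, 0, 1]

/-- The matrix `γ(x)` of the Ree group with `x ^ t` replaced by an independent parameter `X`. -/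
def gamma (x X : K) : Matrix (Fin 7) (Fin 7) K :=
  !![1, 0, 0, -X, 0, -x, -X^2;
     0, 1, 0, 0, -X, 0, x;
     0, 0, 1, 0, 0, X, 0;
     0, 0, 0, 1, 0, 0, -X;
     0, 0, 0, 0, 1, 0, 0;
     0, 0, 0, 0, 0, 1, 0;
     0, 0, 0, 0, 0, 0, 1]

/-- The weights of the 7-dimensional representation of `G₂`, evaluated at the torus element with
value `y` at the weight of `e 1` and `z` at the weight of `e 2`. -/
def weight (y z : Kˣ) : Fin 7 → Kˣ := ![y * z, y, z, 1, z⁻¹, y⁻¹, (y * z)⁻¹]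

/-- The element of the maximal torus of `G₂` acting on `e 1` by `y` and on `e 2` by `z`. -/
def torus (y z : Kˣ) : Matrix (Fin 7) (Fin 7) K := Matrix.diagonal fun i => (weight y z i : K)

theorem beta_mulVec (x X : K) (v : Fin 7 → K) : beta x X *ᵥ v = ![
    v 0 - X * v 2 - x * v 4 - X * x * v 6,
    v 1 + X * v 3 - X^2 * v 5,
    v 2 + x * v 6,
    v 3 + X * v 5,
    v 4 + X * v 6,
    v 5,
    v 6] := by
  ext i
  fin_cases i <;> simp [beta, Matrix.mulVec, dotProduct, Fin.sum_univ_seven] <;> ring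

theorem gamma_mulVec (x X : K) (v : Fin 7 → K) : gamma x X *ᵥ v = ![
    v 0 - X * v 3 - x * v 5 - X^2 * v 6,
    v 1 - X * v 4 + x * v 6,
    v 2 + X * v 5,
    v 3 - X * v 6,
    v 4,
    v 5,
    v 6] := by
  ext i
  fin_cases i <;> simp [gamma, Matrix.mulVec, dotProduct, Fin.sum_univ_seven] <;> ring

theorem torus_mulVec (y z : Kˣ) (v : Fin 7 → K) : torus y z *ᵥ v = ![
    y * z * v 0, y * v 1, z * v 2, v 3, (z : K)⁻¹ * v 4, (y : K)⁻¹ * v 5,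
    (y : K)⁻¹ * (z : K)⁻¹ * v 6] := by
  ext i
  fin_cases i <;> simp [torus, weight, Matrix.mulVec_diagonal, mul_comm]

theorem ups_mulVec (v : Fin 7 → K) : ups *ᵥ v = -(v ∘ Fin.rev) := by
  ext i
  fin_cases i <;> simp [ups, Matrix.mulVec, dotProduct, Fin.sum_univ_seven]

theorem beta_cross [CharP K 3] (x X : K) (u v : Fin 7 → K) :
    beta x X *ᵥ cross u v = cross (beta x X *ᵥ u) (beta x X *ᵥ v) := by
  simp only [beta_mulVec]
  ext i
  fin_cases i <;> simp [cross] <;> grind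

theorem gamma_cross [CharP K 3] (x X : K) (u v : Fin 7 → K) :
    gamma x X *ᵥ cross u v = cross (gamma x X *ᵥ u) (gamma x X *ᵥ v) := by
  simp only [gamma_mulVec]
  ext i
  fin_cases i <;> simp [cross] <;> grind

theorem torus_cross (y z : Kˣ) (u v : Fin 7 → K) :
    torus y z *ᵥ cross u v = cross (torus y z *ᵥ u) (torus y z *ᵥ v) := by
  simp only [torus_mulVec]
  ext i
  fin_cases i <;> simp [cross] <;> field_simp

theorem ups_cross (u v : Fin 7 → K) : ups *ᵥ cross u v = cross (ups *ᵥ u) (ups *ᵥ v) := by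
  simp only [ups_mulVec]
  ext i
  fin_cases i <;> simp [cross] <;> ring

theorem beta_outer [CharP K 3] (x X : K) (c v : Fin 7 → K) :
    beta x X *ᵥ outer c v = outer (beta (X^3) x *ᵥ c) (beta x X *ᵥ v) +
      cross ![-X^2*c 4 - X^2*c 6*x, -X*c 3, -X*c 4 - X*c 6*x, c 5*x, X^2*c 6, 0, -X*c 6]
        (beta x X *ᵥ v) := by
  simp only [beta_mulVec]
  ext i
  fin_cases i <;> simp [cross, outer] <;> grind

theorem gamma_outer [CharP K 3] (x X : K) (c v : Fin 7 → K) :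
    gamma x X *ᵥ outer c v = outer (gamma (X^3) x *ᵥ c) (gamma x X *ᵥ v) +
      cross ![-X*c 6*x, X^2*c 5, -X^2*c 6, c 6*x, X*c 5, X*c 6, 0] (gamma x X *ᵥ v) := by
  simp only [gamma_mulVec]
  ext i
  fin_cases i <;> simp [cross, outer] <;> grind

theorem torus_outer (y z : Kˣ) (c v : Fin 7 → K) :
    torus y z *ᵥ outer c v = outer (torus (y * z ^ 2) (y * z⁻¹) *ᵥ c) (torus y z *ᵥ v) := by
  simp only [torus_mulVec]
  ext i
  fin_cases i <;> simp [outer] <;> field_simp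

theorem ups_outer (c v : Fin 7 → K) :
    ups *ᵥ outer c v = outer (ups *ᵥ c) (ups *ᵥ v) := by
  simp only [ups_mulVec]
  ext i
  fin_cases i <;> simp [outer] <;> ring

theorem inv_mulVec_mulVec (g : GL (Fin 7) K) (v : Fin 7 → K) : g⁻¹.val *ᵥ (g.val *ᵥ v) = v := by
  simp

theorem mulVec_inv_mulVec (g : GL (Fin 7) K) (v : Fin 7 → K) : g.val *ᵥ (g⁻¹.val *ᵥ v) = v := by
  simp

/-- The automorphism group of the product `cross`, a group of type `G₂`. -/
def crossAut (K : Type*) [Field K] : Subgroup (GL (Fin 7) K) where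
  carrier := {g | ∀ u v, g.val *ᵥ cross u v = cross (g.val *ᵥ u) (g.val *ᵥ v)}
  one_mem' u v := by simp
  mul_mem' {g h} hg hh u v := by
    simp only [Units.val_mul, ← Matrix.mulVec_mulVec, hh u v, hg _ _]
  inv_mem' {g} hg u v := by
    have := hg (g⁻¹.val *ᵥ u) (g⁻¹.val *ᵥ v)
    rw [mulVec_inv_mulVec, mulVec_inv_mulVec] at this
    rw [← this, inv_mulVec_mulVec]

theorem mulVec_cross {g : GL (Fin 7) K} (hg : g ∈ crossAut K) (u v : Fin 7 → K) :
    g.val *ᵥ cross u v = cross (g.val *ᵥ u) (g.val *ᵥ v) :=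
  hg u v

theorem linearIndependent_mulVec_pair (g : GL (Fin 7) K) {u v : Fin 7 → K}
    (h : LinearIndependent K ![u, v]) : LinearIndependent K ![g.val *ᵥ u, g.val *ᵥ v] := by
  have := h.map' g.val.mulVecLin
    (LinearMap.ker_eq_bot.2 (Matrix.mulVec_injective_of_isUnit g.isUnit))
  rwa [show g.val.mulVecLin ∘ ![u, v] = ![g.val *ᵥ u, g.val *ᵥ v] by
    ext i; fin_cases i <;> rfl] at this

section CharThree

variable [CharP K 3]

theorem form_mulVec_of_linearIndependent {g : GL (Fin 7) K} (hg : g ∈ crossAut K)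
    {u v : Fin 7 → K} (h : LinearIndependent K ![u, v]) :
    form (g.val *ᵥ u) (g.val *ᵥ v) = form u v ∧ form (g.val *ᵥ u) (g.val *ᵥ u) = form u u := by
  have key := cross_cross_self (g.val *ᵥ u) (g.val *ᵥ v)
  rw [← mulVec_cross hg, ← mulVec_cross hg, cross_cross_self, Matrix.mulVec_sub,
    Matrix.mulVec_smul, Matrix.mulVec_smul, sub_eq_add_neg, sub_eq_add_neg, ← neg_smul,
    ← neg_smul, eq_comm] at key
  obtain ⟨h₁, h₂⟩ := (linearIndependent_mulVec_pair g h).eq_of_pair key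
  exact ⟨h₁, neg_inj.1 h₂⟩

theorem form_mulVec {g : GL (Fin 7) K} (hg : g ∈ crossAut K) (u v : Fin 7 → K) :
    form (g.val *ᵥ u) (g.val *ᵥ v) = form u v := by
  by_cases h : LinearIndependent K ![u, v]
  · exact (form_mulVec_of_linearIndependent hg h).1
  rcases eq_or_ne u 0 with rfl | hu
  · simp
  obtain ⟨w, hw⟩ := exists_linearIndependent_pair_of_one_lt_finrank (R := K)
    (by simp) hu
  rw [LinearIndependent.pair_iff' hu] at h
  push Not at h
  obtain ⟨a, rfl⟩ := h
  simp [Matrix.mulVec_smul, (form_mulVec_of_linearIndependent hg hw).2]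

end CharThree

/-- The pairs `(g, g')` such that `g` is an automorphism of `cross` and conjugation by `g` carries
`outer c` to `outer (g' c)` modulo inner derivations. -/
def compatiblePairs (K : Type*) [Field K] : Subgroup (GL (Fin 7) K × GL (Fin 7) K) where
  carrier := {p | p.1 ∈ crossAut K ∧ ∀ c, ∃ w, ∀ v,
    p.1.val *ᵥ outer c v = outer (p.2.val *ᵥ c) (p.1.val *ᵥ v) + cross w (p.1.val *ᵥ v)}
  one_mem' := ⟨one_mem _, fun c => ⟨0, by simp⟩⟩
  mul_mem' {p q} hp hq := by
    refine ⟨mul_mem hp.1 hq.1, fun c => ?_⟩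
    obtain ⟨w, hw⟩ := hq.2 c
    obtain ⟨w', hw'⟩ := hp.2 (q.2.val *ᵥ c)
    refine ⟨w' + p.1.val *ᵥ w, fun v => ?_⟩
    simp only [Prod.fst_mul, Prod.snd_mul, Units.val_mul, ← Matrix.mulVec_mulVec, hw, hw',
      Matrix.mulVec_add, mulVec_cross hp.1, map_add, LinearMap.add_apply, add_assoc]
  inv_mem' {p} hp := by
    refine ⟨inv_mem hp.1, fun c => ?_⟩
    obtain ⟨w, hw⟩ := hp.2 (p.2⁻¹.val *ᵥ c)
    refine ⟨-(p.1⁻¹.val *ᵥ w), fun v => ?_⟩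
    have key := congrArg (p.1⁻¹.val *ᵥ ·) (hw (p.1⁻¹.val *ᵥ v))
    simp only [mulVec_inv_mulVec, inv_mulVec_mulVec, Matrix.mulVec_add,
      mulVec_cross (inv_mem hp.1)] at key
    simp only [Prod.fst_inv, Prod.snd_inv, key, map_neg, LinearMap.neg_apply, add_neg_cancel_right]

theorem eq_zero_of_outer_eq_cross {c w : Fin 7 → K} (h : ∀ v, outer c v = cross w v) : c = 0 := by
  have h' (i j : Fin 7) := congrFun (h (e j)) i
  ext i
  fin_cases i
  · simpa [outer, cross, Pi.single_apply] using h' 0 5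
  · simpa [outer, cross, Pi.single_apply] using h' 0 4
  · simpa [outer, cross, Pi.single_apply] using h' 1 2
  · have : w 3 = 0 := by simpa [outer, cross, Pi.single_apply, eq_comm] using h' 0 0
    simpa [outer, cross, Pi.single_apply, this] using h' 1 1
  · simpa [outer, cross, Pi.single_apply] using h' 2 1
  · simpa [outer, cross, Pi.single_apply] using h' 4 0
  · simpa [outer, cross, Pi.single_apply] using h' 5 0

theorem compatiblePairs_snd_unique {g h h' : GL (Fin 7) K} (hp : (g, h) ∈ compatiblePairs K)
    (hq : (g, h') ∈ compatiblePairs K) : h = h' := by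
  refine Units.ext (Matrix.ext_of_mulVec_single fun i => ?_)
  obtain ⟨w, hw⟩ := hp.2 (Pi.single i 1)
  obtain ⟨w', hw'⟩ := hq.2 (Pi.single i 1)
  refine sub_eq_zero.1 (eq_zero_of_outer_eq_cross (w := w' - w) fun v => ?_)
  have := (hw (g⁻¹.val *ᵥ v)).symm.trans (hw' (g⁻¹.val *ᵥ v))
  simp only [mulVec_inv_mulVec] at this
  simp only [map_sub, LinearMap.sub_apply, sub_eq_sub_iff_add_eq_add, this]
  rw [add_comm]

theorem det_alpha (x X : K) : (alpha x X).det = 1 := by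
  rw [Matrix.det_of_isUpperTriangular]
  · simp [alpha, Fin.prod_univ_seven]
  · intro i j hij
    fin_cases i <;> fin_cases j <;> first | rfl | exact absurd hij (by decide)

theorem det_beta (x X : K) : (beta x X).det = 1 := by
  rw [Matrix.det_of_isUpperTriangular]
  · simp [beta, Fin.prod_univ_seven]
  · intro i j hij
    fin_cases i <;> fin_cases j <;> first | rfl | exact absurd hij (by decide)

theorem det_gamma (x X : K) : (gamma x X).det = 1 := by
  rw [Matrix.det_of_isUpperTriangular]
  · simp [gamma, Fin.prod_univ_seven]
  · intro i j hij
    fin_cases i <;> fin_cases j <;> first | rfl | exact absurd hij (by decide)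

theorem det_torus (y z : Kˣ) : (torus y z).det = 1 := by
  simp [torus, weight, Fin.prod_univ_seven]
  field_simp

theorem det_ups : (ups : Matrix (Fin 7) (Fin 7) K).det = 1 := by
  have h : (ups : Matrix (Fin 7) (Fin 7) K) = -(Fin.revPerm : Equiv.Perm (Fin 7)).permMatrix K := by
    ext i j
    fin_cases i <;> fin_cases j <;> simp [ups, Equiv.Perm.permMatrix, PEquiv.toMatrix, Fin.rev]
  have hsign : Equiv.Perm.sign (Fin.revPerm : Equiv.Perm (Fin 7)) = -1 := by decide
  rw [h, Matrix.det_neg, Matrix.det_permutation, hsign]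
  norm_num

/-- `alpha x X` as an invertible matrix. -/
def alphaGL (x X : K) : GL (Fin 7) K := .mkOfDetNeZero (alpha x X) (by simp [det_alpha])

/-- `beta x X` as an invertible matrix. -/
def betaGL (x X : K) : GL (Fin 7) K := .mkOfDetNeZero (beta x X) (by simp [det_beta])

/-- `gamma x X` as an invertible matrix. -/
def gammaGL (x X : K) : GL (Fin 7) K := .mkOfDetNeZero (gamma x X) (by simp [det_gamma])

/-- `torus y z` as an invertible matrix. -/
def torusGL (y z : Kˣ) : GL (Fin 7) K := .mkOfDetNeZero (torus y z) (by simp [det_torus])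

/-- `Υ` as an invertible matrix; it represents the longest element of the Weyl group. -/
def upsGL : GL (Fin 7) K := .mkOfDetNeZero ups (by simp [det_ups])

@[simp] theorem coe_alphaGL (x X : K) : (alphaGL x X).val = alpha x X := rfl

@[simp] theorem coe_betaGL (x X : K) : (betaGL x X).val = beta x X := rfl

@[simp] theorem coe_gammaGL (x X : K) : (gammaGL x X).val = gamma x X := rfl

@[simp] theorem coe_torusGL (y z : Kˣ) : (torusGL y z).val = torus y z := rfl

@[simp] theorem coe_upsGL : (upsGL : GL (Fin 7) K).val = ups := rfl

/-- The standard generators of `G₂(K)`, paired with their images under the exceptional isogeny,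
which exchanges long and short roots. -/
inductive IsogenyGenerator : GL (Fin 7) K × GL (Fin 7) K → Prop
  | alpha (x X : K) : IsogenyGenerator (alphaGL x X, alphaGL (X ^ 3) x)
  | beta (x X : K) : IsogenyGenerator (betaGL x X, betaGL (X ^ 3) x)
  | gamma (x X : K) : IsogenyGenerator (gammaGL x X, gammaGL (X ^ 3) x)
  | torus (y z : Kˣ) : IsogenyGenerator (torusGL y z, torusGL (y * z ^ 2) (y * z⁻¹))
  | ups : IsogenyGenerator (upsGL, upsGL)

/-- The graph of the exceptional isogeny of `G₂(K)` in characteristic `3`. -/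
def isogenyGraph (K : Type*) [Field K] : Subgroup (GL (Fin 7) K × GL (Fin 7) K) :=
  Subgroup.closure {p | IsogenyGenerator p}

theorem IsogenyGenerator.mem_isogenyGraph {p : GL (Fin 7) K × GL (Fin 7) K}
    (h : IsogenyGenerator p) : p ∈ isogenyGraph K :=
  Subgroup.subset_closure h

theorem isogenyGraph_le_compatiblePairs [CharP K 3] : isogenyGraph K ≤ compatiblePairs K := by
  rw [isogenyGraph, Subgroup.closure_le]
  rintro _ (⟨x, X⟩ | ⟨x, X⟩ | ⟨x, X⟩ | ⟨y, z⟩ | -)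
  · exact ⟨alpha_cross x X, fun c => ⟨_, alpha_outer x X c⟩⟩
  · exact ⟨beta_cross x X, fun c => ⟨_, beta_outer x X c⟩⟩
  · exact ⟨gamma_cross x X, fun c => ⟨_, gamma_outer x X c⟩⟩
  · exact ⟨torus_cross y z, fun c => ⟨0, fun v => by simpa using torus_outer y z c v⟩⟩
  · exact ⟨ups_cross, fun c => ⟨0, fun v => by simpa using ups_outer c v⟩⟩

theorem det_eq_one_of_mem_isogenyGraph {p : GL (Fin 7) K × GL (Fin 7) K}
    (hp : p ∈ isogenyGraph K) : p.1.val.det = 1 := by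
  have : isogenyGraph K ≤ (Matrix.GeneralLinearGroup.det.comp (MonoidHom.fst _ _)).ker := by
    rw [isogenyGraph, Subgroup.closure_le]
    rintro _ (⟨x, X⟩ | ⟨x, X⟩ | ⟨x, X⟩ | ⟨y, z⟩ | -)
    all_goals exact Units.ext (by simp [det_alpha, det_beta, det_gamma, det_torus, det_ups])
  simpa using congrArg Units.val (this hp)

section Functoriality

variable {L : Type*} [Field L] (f : K →+* L)

theorem comp_mulVec (g : GL (Fin 7) K) (v : Fin 7 → K) :
    f ∘ (g.val *ᵥ v) = (GeneralLinearGroup.map f g).val *ᵥ (f ∘ v) :=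
  funext fun i => RingHom.map_mulVec f g.val v i

theorem map_alphaGL (x X : K) : GeneralLinearGroup.map f (alphaGL x X) = alphaGL (f x) (f X) := by
  ext i j
  fin_cases i <;> fin_cases j <;> simp [alpha]

theorem map_betaGL (x X : K) : GeneralLinearGroup.map f (betaGL x X) = betaGL (f x) (f X) := by
  ext i j
  fin_cases i <;> fin_cases j <;> simp [beta]

theorem map_gammaGL (x X : K) : GeneralLinearGroup.map f (gammaGL x X) = gammaGL (f x) (f X) := by
  ext i j
  fin_cases i <;> fin_cases j <;> simp [gamma]

theorem map_torusGL (y z : Kˣ) :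
    GeneralLinearGroup.map f (torusGL y z) = torusGL (Units.map f y) (Units.map f z) := by
  ext i j
  fin_cases i <;> fin_cases j <;> simp [torus, weight]

theorem map_upsGL : GeneralLinearGroup.map f upsGL = upsGL := by
  ext i j
  fin_cases i <;> fin_cases j <;> simp [ups]

theorem map_mem_isogenyGraph {p : GL (Fin 7) K × GL (Fin 7) K} (hp : p ∈ isogenyGraph K) :
    (GeneralLinearGroup.map f p.1, GeneralLinearGroup.map f p.2) ∈ isogenyGraph L := by
  suffices isogenyGraph K ≤ (isogenyGraph L).comap
    ((GeneralLinearGroup.map f).prodMap (GeneralLinearGroup.map f)) from this hp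
  rw [isogenyGraph, Subgroup.closure_le]
  rintro _ (⟨x, X⟩ | ⟨x, X⟩ | ⟨x, X⟩ | ⟨y, z⟩ | -)
  all_goals simp only [SetLike.mem_coe, Subgroup.mem_comap, MonoidHom.coe_prodMap, Prod.map_apply,
    map_alphaGL, map_betaGL, map_gammaGL, map_torusGL, map_upsGL, map_pow, map_mul, map_inv]
  · exact (IsogenyGenerator.alpha _ _).mem_isogenyGraph
  · exact (IsogenyGenerator.beta _ _).mem_isogenyGraph
  · exact (IsogenyGenerator.gamma _ _).mem_isogenyGraph
  · exact (IsogenyGenerator.torus _ _).mem_isogenyGraph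
  · exact IsogenyGenerator.ups.mem_isogenyGraph

theorem snd_frobenius_mem_isogenyGraph [CharP K 3] {p : GL (Fin 7) K × GL (Fin 7) K}
    (hp : p ∈ isogenyGraph K) :
    (p.2, GeneralLinearGroup.map (frobenius K 3) p.1) ∈ isogenyGraph K := by
  suffices isogenyGraph K ≤ (isogenyGraph K).comap
    ((MonoidHom.snd _ _).prod ((GeneralLinearGroup.map (frobenius K 3)).comp (MonoidHom.fst _ _)))
    from this hp
  rw [isogenyGraph, Subgroup.closure_le]
  rintro _ (⟨x, X⟩ | ⟨x, X⟩ | ⟨x, X⟩ | ⟨y, z⟩ | -)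
  all_goals simp only [SetLike.mem_coe, Subgroup.mem_comap, MonoidHom.prod_apply,
    MonoidHom.coe_comp, MonoidHom.coe_fst, MonoidHom.coe_snd, Function.comp_apply, map_alphaGL,
    map_betaGL, map_gammaGL, map_torusGL, map_upsGL, frobenius_def]
  · exact (IsogenyGenerator.alpha _ _).mem_isogenyGraph
  · exact (IsogenyGenerator.beta _ _).mem_isogenyGraph
  · exact (IsogenyGenerator.gamma _ _).mem_isogenyGraph
  · have hy : Units.map (frobenius K 3 : K →* K) y = y * z ^ 2 * (y * z⁻¹) ^ 2 := Units.ext <| by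
      simp [frobenius_def]
      field_simp
    have hz : Units.map (frobenius K 3 : K →* K) z = y * z ^ 2 * (y * z⁻¹)⁻¹ := Units.ext <| by
      simp [frobenius_def]
      field_simp
    rw [hy, hz]
    exact (IsogenyGenerator.torus _ _).mem_isogenyGraph
  · exact IsogenyGenerator.ups.mem_isogenyGraph

end Functoriality

theorem isogenyGraph_snd_unique [CharP K 3] {g h h' : GL (Fin 7) K}
    (hp : (g, h) ∈ isogenyGraph K) (hq : (g, h') ∈ isogenyGraph K) : h = h' :=
  compatiblePairs_snd_unique (isogenyGraph_le_compatiblePairs hp)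
    (isogenyGraph_le_compatiblePairs hq)

theorem mulVec_e (A : Matrix (Fin 7) (Fin 7) K) (i j : Fin 7) : (A *ᵥ e j) i = A i j := by
  simp

theorem cross_e1_e2 : cross (e 1 : Fin 7 → K) (e 2) = e 0 := by
  ext i; fin_cases i <;> simp [cross]

theorem cross_e0_e6 : cross (e 0 : Fin 7 → K) (e 6) = e 3 := by
  ext i; fin_cases i <;> simp [cross]

theorem cross_e6_e1 : cross (e 6 : Fin 7 → K) (e 1) = e 4 := by
  ext i; fin_cases i <;> simp [cross]

theorem cross_e2_e6 : cross (e 2 : Fin 7 → K) (e 6) = e 5 := by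
  ext i; fin_cases i <;> simp [cross]

theorem cross_e0_e3 : cross (e 0 : Fin 7 → K) (e 3) = e 0 := by
  ext i; fin_cases i <;> simp [cross]

theorem e_ne_zero (i : Fin 7) : (e i : Fin 7 → K) ≠ 0 := by simp

theorem ne_zero_of_mulVec_eq_smul {g : GL (Fin 7) K} {v u : Fin 7 → K} {a : K} (hv : v ≠ 0)
    (h : g.val *ᵥ v = a • u) : a ≠ 0 := by
  rintro rfl
  rw [zero_smul] at h
  exact hv (by rw [← inv_mulVec_mulVec g v, h, Matrix.mulVec_zero])

theorem mulVec_cross_of_eigenvectors {g : GL (Fin 7) K} (hg : g ∈ crossAut K)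
    {u v : Fin 7 → K} {a b : K} (hu : g.val *ᵥ u = a • u) (hv : g.val *ᵥ v = b • v) :
    g.val *ᵥ cross u v = (a * b) • cross u v := by
  rw [mulVec_cross hg, hu, hv, map_smul, map_smul, LinearMap.smul_apply, smul_smul, mul_comm]

theorem eigenvalue_mul_eq_one {g : GL (Fin 7) K} (hg : g ∈ crossAut K) {a d : K}
    (h₀ : g.val *ᵥ e 0 = a • e 0) (h₆ : g.val *ᵥ e 6 = d • e 6) : a * d = 1 := by
  have h₃ := mulVec_cross_of_eigenvectors hg h₀ h₆
  rw [cross_e0_e6] at h₃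
  have h₀' := mulVec_cross_of_eigenvectors hg h₀ h₃
  rw [cross_e0_e3, h₀] at h₀'
  exact mul_left_cancel₀ (ne_zero_of_mulVec_eq_smul (e_ne_zero 0) h₀)
    (by simpa [eq_comm] using congrFun h₀' 0)

theorem mulVec_e3_of_eigenvectors {g : GL (Fin 7) K} (hg : g ∈ crossAut K) {a d : K}
    (h₀ : g.val *ᵥ e 0 = a • e 0) (h₆ : g.val *ᵥ e 6 = d • e 6) : g.val *ᵥ e 3 = e 3 := by
  rw [← cross_e0_e6, mulVec_cross_of_eigenvectors hg h₀ h₆, eigenvalue_mul_eq_one hg h₀ h₆,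
    one_smul]

theorem exists_eq_torusGL {g : GL (Fin 7) K} (hg : g ∈ crossAut K) {p s d : K}
    (h₁ : g.val *ᵥ e 1 = p • e 1) (h₂ : g.val *ᵥ e 2 = s • e 2)
    (h₆ : g.val *ᵥ e 6 = d • e 6) : ∃ y z : Kˣ, g = torusGL y z := by
  have h₀ := mulVec_cross_of_eigenvectors hg h₁ h₂
  have h₄ := mulVec_cross_of_eigenvectors hg h₆ h₁
  have h₅ := mulVec_cross_of_eigenvectors hg h₂ h₆
  rw [cross_e1_e2] at h₀
  rw [cross_e6_e1] at h₄
  rw [cross_e2_e6] at h₅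
  have h₃ := mulVec_e3_of_eigenvectors hg h₀ h₆
  have hd : d = (p * s)⁻¹ := eq_inv_of_mul_eq_one_right (eigenvalue_mul_eq_one hg h₀ h₆)
  have hp : p ≠ 0 := ne_zero_of_mulVec_eq_smul (e_ne_zero 1) h₁
  have hs : s ≠ 0 := ne_zero_of_mulVec_eq_smul (e_ne_zero 2) h₂
  refine ⟨Units.mk0 p hp, Units.mk0 s hs, Units.ext (Matrix.ext_of_mulVec_single fun j => ?_)⟩
  rw [coe_torusGL, torus_mulVec]
  subst hd
  fin_cases j
  · exact h₀.trans (by ext i; fin_cases i <;> simp)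
  · exact h₁.trans (by ext i; fin_cases i <;> simp)
  · exact h₂.trans (by ext i; fin_cases i <;> simp)
  · exact h₃.trans (by ext i; fin_cases i <;> simp)
  · exact h₄.trans (by ext i; fin_cases i <;> simp [hp])
  · exact h₅.trans (by ext i; fin_cases i <;> simp [hs])
  · exact h₆.trans (by ext i; fin_cases i <;> simp [mul_comm])

theorem torusGL_inj {y z y' z' : Kˣ} : torusGL y z = torusGL y' z' ↔ y = y' ∧ z = z' := by
  refine ⟨fun h => ?_, fun ⟨hy, hz⟩ => by rw [hy, hz]⟩
  have h' (i : Fin 7) : torus y z i i = torus y' z' i i := congrArg (fun g => g.val i i) h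
  exact ⟨Units.ext (by simpa [torus, weight] using h' 1),
    Units.ext (by simpa [torus, weight] using h' 2)⟩

section Grading

/-- The `ZMod 3`-grading of `K⁷` by the eigenvalues of `cross (e 3)`. -/
def grade : Fin 7 → ZMod 3 := ![-1, 1, 1, 0, -1, -1, 1]

variable [CharP K 3]

theorem cross_e3 (v : Fin 7 → K) (i : Fin 7) :
    cross (e 3) v i = ZMod.castHom dvd_rfl K (grade i) * v i := by
  fin_cases i <;> simp [cross, grade]

theorem apply_eq_zero_of_grade_ne {g : GL (Fin 7) K} (hg : g ∈ crossAut K)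
    (h₃ : g.val *ᵥ e 3 = e 3) {i j : Fin 7} (hij : grade i ≠ grade j) : g.val i j = 0 := by
  have hj : cross (e 3 : Fin 7 → K) (e j) = ZMod.castHom dvd_rfl K (grade j) • e j := by
    ext k
    rw [cross_e3, Pi.smul_apply, smul_eq_mul]
    rcases eq_or_ne k j with rfl | hk
    · rfl
    · simp [hk]
  have key := congrFun (mulVec_cross hg (e 3) (e j)) i
  rw [h₃, hj, cross_e3, Matrix.mulVec_smul, Pi.smul_apply, smul_eq_mul, mulVec_e] at key
  exact (mul_eq_mul_right_iff.1 key.symm).resolve_left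
    fun h => hij ((ZMod.castHom dvd_rfl K).injective h)

end Grading

section TwistedFixed

/-- The elements `g` of `crossAut K` whose image under the isogeny of `G₂` is the entrywise image
of `g` under `φ`. -/
def twistedFixed (φ : K →+* K) : Subgroup (GL (Fin 7) K) :=
  (compatiblePairs K).comap ((MonoidHom.id _).prod (GeneralLinearGroup.map φ))

variable {φ : K →+* K} {g h : GL (Fin 7) K}

theorem mem_crossAut_of_mem_twistedFixed (hg : g ∈ twistedFixed φ) : g ∈ crossAut K :=
  hg.1

theorem apply_two_one_of_mem_compatiblePairs (hp : (g, h) ∈ compatiblePairs K) {d : K}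
    (h₆ : g.val *ᵥ e 6 = d • e 6) : g.val 2 1 = d * h.val 1 0 := by
  obtain ⟨w, hw⟩ := hp.2 (e 0)
  have houter : outer (e 0 : Fin 7 → K) (e 6) = -e 1 := by
    ext i; fin_cases i <;> simp [outer]
  have key := congrFun (hw (e 6)) 2
  rw [houter, Matrix.mulVec_neg, h₆] at key
  simpa [outer, cross] using key

theorem apply_one_two_of_mem_compatiblePairs (hp : (g, h) ∈ compatiblePairs K) {d : K}
    (h₆ : g.val *ᵥ e 6 = d • e 6) : g.val 1 2 = d * h.val 0 1 := by
  obtain ⟨w, hw⟩ := hp.2 (e 1)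
  have houter : outer (e 1 : Fin 7 → K) (e 6) = -e 2 := by
    ext i; fin_cases i <;> simp [outer]
  have key := congrFun (hw (e 6)) 1
  rw [houter, Matrix.mulVec_neg, h₆] at key
  simpa [outer, cross] using key

variable [CharP K 3]

theorem apply_six_of_mulVec_e0 (hg : g ∈ crossAut K) {c : K} (h₀ : g.val *ᵥ e 0 = c • e 0)
    {j : Fin 7} (hj : j ≠ 6) : g.val 6 j = 0 := by
  have hform (v : Fin 7 → K) : form (e 0) v = v 6 := by simp [form]
  have key := form_mulVec hg (e 0) (e j)
  rw [h₀, map_smul, LinearMap.smul_apply, hform, hform, mulVec_e, smul_eq_mul,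
    show (e j : Fin 7 → K) 6 = 0 from Pi.single_eq_of_ne hj.symm 1] at key
  exact (mul_eq_zero.1 key).resolve_left (ne_zero_of_mulVec_eq_smul (e_ne_zero 0) h₀)

theorem exists_eq_torusGL_of_mem_twistedFixed (hg : g ∈ twistedFixed φ) {c d : K}
    (h₀ : g.val *ᵥ e 0 = c • e 0) (h₆ : g.val *ᵥ e 6 = d • e 6) :
    ∃ y z : Kˣ, g = torusGL y z ∧ Units.map φ y = y * z ^ 2 ∧ Units.map φ z = y * z⁻¹ := by
  have hcr := mem_crossAut_of_mem_twistedFixed hg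
  have hgrade {i j : Fin 7} (hij : grade i ≠ grade j) : g.val i j = 0 :=
    apply_eq_zero_of_grade_ne hcr (mulVec_e3_of_eigenvectors hcr h₀ h₆) hij
  have h₁₀ : g.val 1 0 = 0 := hgrade (by decide)
  have h₂₁ : g.val 2 1 = 0 := by
    simpa [h₁₀] using apply_two_one_of_mem_compatiblePairs hg h₆
  have h₀₁ : g.val 0 1 = 0 := hgrade (by decide)
  have h₁₂ : g.val 1 2 = 0 := by
    simpa [h₀₁] using apply_one_two_of_mem_compatiblePairs hg h₆
  have h₁ : g.val *ᵥ e 1 = g.val 1 1 • e 1 := by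
    ext i
    rw [mulVec_e]
    fin_cases i <;>
      simp [hgrade (show grade 0 ≠ grade 1 by decide), h₂₁,
        hgrade (show grade 3 ≠ grade 1 by decide), hgrade (show grade 4 ≠ grade 1 by decide),
        hgrade (show grade 5 ≠ grade 1 by decide),
        apply_six_of_mulVec_e0 hcr h₀ (show (1 : Fin 7) ≠ 6 by decide)]
  have h₂ : g.val *ᵥ e 2 = g.val 2 2 • e 2 := by
    ext i
    rw [mulVec_e]
    fin_cases i <;>
      simp [hgrade (show grade 0 ≠ grade 2 by decide), h₁₂,
        hgrade (show grade 3 ≠ grade 2 by decide), hgrade (show grade 4 ≠ grade 2 by decide),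
        hgrade (show grade 5 ≠ grade 2 by decide),
        apply_six_of_mulVec_e0 hcr h₀ (show (2 : Fin 7) ≠ 6 by decide)]
  obtain ⟨y, z, rfl⟩ := exists_eq_torusGL hcr h₁ h₂ h₆
  have htorus := isogenyGraph_le_compatiblePairs (IsogenyGenerator.torus y z).mem_isogenyGraph
  refine ⟨y, z, rfl, torusGL_inj.1 ?_⟩
  rw [← map_torusGL]
  exact compatiblePairs_snd_unique hg htorus

end TwistedFixed

section Ovoid

/-- The vectors `v` for which the derivation `outer (φ ∘ v)` agrees modulo inner derivations with
one that vanishes on `cross v`.  The lines they span form the Ree–Tits ovoid. -/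
def IsOvoidVector (φ : K →+* K) (v : Fin 7 → K) : Prop :=
  ∃ w, ∀ u, outer (φ ∘ v) (cross v u) + cross w (cross v u) = 0

variable {φ : K →+* K}

theorem isOvoidVector_e0 : IsOvoidVector φ (e 0) := by
  refine ⟨0, fun u => ?_⟩
  ext i
  fin_cases i <;> simp [outer, cross]

theorem IsOvoidVector.mulVec {v : Fin 7 → K} (hv : IsOvoidVector φ v) {g : GL (Fin 7) K}
    (hg : g ∈ twistedFixed φ) : IsOvoidVector φ (g.val *ᵥ v) := by
  obtain ⟨w, hw⟩ := hv
  have hcr := mem_crossAut_of_mem_twistedFixed hg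
  obtain ⟨w', hw'⟩ := hg.2 (φ ∘ v)
  refine ⟨w' + g.val *ᵥ w, fun u => ?_⟩
  have hu : cross (g.val *ᵥ v) u = g.val *ᵥ cross v (g⁻¹.val *ᵥ u) := by
    rw [mulVec_cross hcr, mulVec_inv_mulVec]
  have key := hw' (cross v (g⁻¹.val *ᵥ u))
  simp only [MonoidHom.prod_apply, MonoidHom.id_apply] at key
  rw [comp_mulVec, hu, map_add, LinearMap.add_apply, ← add_assoc, ← key, ← mulVec_cross hcr,
    ← Matrix.mulVec_add, hw, Matrix.mulVec_zero]

theorem IsOvoidVector.eq_smul_e0 {v : Fin 7 → K} (hv : IsOvoidVector φ v) (h₆ : v 6 = 0) :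
    v = v 0 • e 0 := by
  obtain ⟨w, hw⟩ := hv
  have entry (i j : Fin 7) := congrFun (hw (e j)) i
  have h₅ : v 5 = 0 := by
    simpa [outer, cross, h₆] using entry 6 0
  have h₄ : v 4 = 0 := by
    have h₄₀ := entry 4 0
    have h₅₃ := entry 5 3
    simp [outer, cross, h₆, h₅] at h₄₀ h₅₃
    grind [map_eq_zero]
  have h₃ : v 3 = 0 := by
    have h₀₀ := entry 0 0
    have h₁₀ := entry 1 0
    have h₁₁ := entry 1 1
    simp [outer, cross, h₆, h₅, h₄] at h₀₀ h₁₀ h₁₁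
    grind [map_eq_zero]
  have h₂ : v 2 = 0 := by
    have h₀₁ := entry 0 1
    have h₁₁ := entry 1 1
    have h₁₃ := entry 1 3
    simp [outer, cross, h₆, h₅, h₄, h₃] at h₀₁ h₁₁ h₁₃
    grind [map_eq_zero]
  have h₁ : v 1 = 0 := by
    have h₁₅ := entry 1 5
    have h₀₅ := entry 0 5
    have h₀₆ := entry 0 6
    simp [outer, cross, h₆, h₅, h₄, h₃, h₂] at h₁₅ h₀₅ h₀₆
    grind [map_eq_zero]
  ext i
  fin_cases i <;> simp [h₁, h₂, h₃, h₄, h₅, h₆]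

theorem IsOvoidVector.eq_smul_e6 {v : Fin 7 → K} (hv : IsOvoidVector φ v) (h₃ : v 3 = 0)
    (h₄ : v 4 = 0) (h₅ : v 5 = 0) (h₆ : v 6 ≠ 0) : v = v 6 • e 6 := by
  obtain ⟨w, hw⟩ := hv
  have entry (i j : Fin 7) := congrFun (hw (e j)) i
  have hφ : φ (v 6) ≠ 0 := (map_ne_zero φ).2 h₆
  have h₅₁ := entry 5 1
  have h₆₀ := entry 6 0
  have h₆₄ := entry 6 4
  have h₄₁ := entry 4 1
  have h₅₂ := entry 5 2
  simp [outer, cross, h₃, h₄, h₅] at h₅₁ h₆₀ h₆₄ h₄₁ h₅₂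
  have h₀ : v 0 = 0 := by grind
  have h₁ : v 1 = 0 := by grind
  have h₂ : v 2 = 0 := by grind
  ext i
  fin_cases i <;> simp [h₀, h₁, h₂, h₃, h₄, h₅]

end Ovoid

section Ree

theorem amat_eq_alpha (t : ℕ) (x : K) : amat t x = alpha x (x ^ t) := by
  ext i j
  fin_cases i <;> fin_cases j <;> simp [amat, alpha] <;> ring

theorem bmat_eq_beta (t : ℕ) (x : K) : bmat t x = beta x (x ^ t) := by
  ext i j
  fin_cases i <;> fin_cases j <;> simp [bmat, beta] <;> ring

theorem cmat_eq_gamma (t : ℕ) (x : K) : cmat t x = gamma x (x ^ t) := by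
  ext i j
  fin_cases i <;> fin_cases j <;> simp [cmat, gamma]
  ring

theorem hmat_eq_torus (t : ℕ) (l : Kˣ) :
    hmat t l = torus (l * (l ^ t)⁻¹) ((l ^ t) ^ 2 * l⁻¹) := by
  have hl : (l : K) ≠ 0 := l.ne_zero
  have e₁ : (1 - (t : ℤ)) = 1 + -(t : ℤ) := by ring
  have e₂ : (2 * (t : ℤ) - 1) = (t : ℤ) + (t : ℤ) + -1 := by ring
  have e₃ : (1 - 2 * (t : ℤ)) = 1 + -(t : ℤ) + -(t : ℤ) := by ring
  have e₄ : ((t : ℤ) - 1) = (t : ℤ) + -1 := by ring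
  rw [hmat, torus, e₁, e₂, e₃, e₄]
  congr 1
  ext i
  fin_cases i <;> simp [weight, zpow_add₀ hl, _root_.zpow_neg] <;> field_simp

variable (t : ℕ)

theorem alphaGL_mem_reeGroup (x : K) : alphaGL x (x ^ t) ∈ ReeGroup (F := K) t :=
  Subgroup.subset_closure (.inl ⟨x, (amat_eq_alpha t x).symm⟩)

theorem betaGL_mem_reeGroup (x : K) : betaGL x (x ^ t) ∈ ReeGroup (F := K) t :=
  Subgroup.subset_closure (.inr (.inl ⟨x, (bmat_eq_beta t x).symm⟩))

theorem gammaGL_mem_reeGroup (x : K) : gammaGL x (x ^ t) ∈ ReeGroup (F := K) t :=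
  Subgroup.subset_closure (.inr (.inr (.inl ⟨x, (cmat_eq_gamma t x).symm⟩)))

theorem torusGL_mem_reeGroup (l : Kˣ) :
    torusGL (l * (l ^ t)⁻¹) ((l ^ t) ^ 2 * l⁻¹) ∈ ReeGroup (F := K) t :=
  Subgroup.subset_closure (.inr (.inr (.inr (.inl ⟨l, (hmat_eq_torus t l).symm⟩))))

theorem upsGL_mem_reeGroup : upsGL ∈ ReeGroup (F := K) t :=
  Subgroup.subset_closure (.inr (.inr (.inr (.inr rfl))))

/-- `φ` is the field automorphism `x ↦ x ^ (3 * t)` and inverts `x ↦ x ^ t`; so `φ` is a square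
root of the Frobenius endomorphism. -/
structure Twist (t : ℕ) (φ : K →+* K) : Prop where
  cube : ∀ x, φ x = (x ^ t) ^ 3
  root : ∀ x, φ (x ^ t) = x

variable {t} {φ : K →+* K}

theorem Twist.map_pow_eq (ht : Twist t φ) (x : K) : φ x ^ t = x := by
  rw [← map_pow, ht.root]

theorem Twist.exists_eq_of_map_eq (ht : Twist t φ) {y z : Kˣ} (hy : Units.map φ y = y * z ^ 2)
    (hz : Units.map φ z = y * z⁻¹) : ∃ l : Kˣ, y = l * (l ^ t)⁻¹ ∧ z = (l ^ t) ^ 2 * l⁻¹ := by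
  refine ⟨Units.map φ (y * z), ?_⟩
  have hl : Units.map (φ : K →* K) (y * z) ^ t = y * z :=
    Units.ext (by simpa using ht.map_pow_eq (y * z : Kˣ))
  rw [hl, map_mul, hy, hz]
  constructor <;> · ext; push_cast; field_simp

theorem reeGroup_le_isogenyGraph (ht : Twist t φ) :
    ReeGroup t ≤ (isogenyGraph K).comap ((MonoidHom.id _).prod (GeneralLinearGroup.map φ)) := by
  rw [ReeGroup, Subgroup.closure_le]
  intro g hg
  simp only [SetLike.mem_coe, Subgroup.mem_comap, MonoidHom.prod_apply, MonoidHom.id_apply]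
  rcases hg with ⟨x, hx⟩ | ⟨x, hx⟩ | ⟨x, hx⟩ | ⟨l, hl⟩ | hups
  · rw [show g = alphaGL x (x ^ t) from Units.ext (hx.trans (amat_eq_alpha t x)), map_alphaGL,
      ht.root, ht.cube]
    exact (IsogenyGenerator.alpha _ _).mem_isogenyGraph
  · rw [show g = betaGL x (x ^ t) from Units.ext (hx.trans (bmat_eq_beta t x)), map_betaGL,
      ht.root, ht.cube]
    exact (IsogenyGenerator.beta _ _).mem_isogenyGraph
  · rw [show g = gammaGL x (x ^ t) from Units.ext (hx.trans (cmat_eq_gamma t x)), map_gammaGL,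
      ht.root, ht.cube]
    exact (IsogenyGenerator.gamma _ _).mem_isogenyGraph
  · have hroot : Units.map (φ : K →* K) (l ^ t) = l := Units.ext (by simp [ht.map_pow_eq])
    have hcube : Units.map (φ : K →* K) l = (l ^ t) ^ 3 := Units.ext (by simp [ht.cube])
    rw [show g = torusGL _ _ from Units.ext (hl.trans (hmat_eq_torus t l)), map_torusGL,
      map_mul, map_mul, map_inv, map_inv, map_pow _ (l ^ t) 2, hroot, hcube]
    convert (IsogenyGenerator.torus (l * (l ^ t)⁻¹) ((l ^ t) ^ 2 * l⁻¹)).mem_isogenyGraph using 3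
    · generalize l ^ t = k
      ext
      push_cast
      field_simp
    · generalize l ^ t = k
      ext
      push_cast
      field_simp
  · rw [show g = upsGL from Units.ext hups, map_upsGL]
    exact IsogenyGenerator.ups.mem_isogenyGraph

theorem reeGroup_le_twistedFixed [CharP K 3] (ht : Twist t φ) : ReeGroup t ≤ twistedFixed φ :=
  (reeGroup_le_isogenyGraph ht).trans (Subgroup.comap_mono isogenyGraph_le_compatiblePairs)

theorem exists_mem_reeGroup_mulVec_eq_smul_e6 [CharP K 3] (ht : Twist t φ) {v : Fin 7 → K}
    (hv : IsOvoidVector φ v) (h₆ : v 6 ≠ 0) :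
    ∃ u ∈ ReeGroup (F := K) t, u.val *ᵥ e 0 = e 0 ∧ u.val *ᵥ v = v 6 • e 6 := by
  obtain ⟨a, ha⟩ : ∃ a, a ^ t = v 5 / v 6 := ⟨_, ht.map_pow_eq _⟩
  let v₁ := alpha a (a ^ t) *ᵥ v
  obtain ⟨b, hb⟩ : ∃ b, b ^ t = -v₁ 4 / v 6 := ⟨_, ht.map_pow_eq _⟩
  let v₂ := beta b (b ^ t) *ᵥ v₁
  obtain ⟨c, hc⟩ : ∃ c, c ^ t = v₂ 3 / v 6 := ⟨_, ht.map_pow_eq _⟩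
  let u : GL (Fin 7) K := gammaGL c (c ^ t) * (betaGL b (b ^ t) * alphaGL a (a ^ t))
  have hu : u ∈ ReeGroup (F := K) t := mul_mem (gammaGL_mem_reeGroup t c)
    (mul_mem (betaGL_mem_reeGroup t b) (alphaGL_mem_reeGroup t a))
  have huv : u.val *ᵥ v = gamma c (c ^ t) *ᵥ v₂ := by
    simp [u, v₂, v₁]
  have hpoint := hv.mulVec (reeGroup_le_twistedFixed ht hu)
  have a₅ : v₁ 5 = 0 := by simp [v₁, alpha_mulVec, ha, h₆]
  have a₆ : v₁ 6 = v 6 := by simp [v₁, alpha_mulVec]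
  have b₄ : v₂ 4 = 0 := by simp [v₂, beta_mulVec, a₆, hb, h₆]
  have b₅ : v₂ 5 = 0 := by simp [v₂, beta_mulVec, a₅]
  have b₆ : v₂ 6 = v 6 := by simp [v₂, beta_mulVec, a₆]
  have c₆ : (u.val *ᵥ v) 6 = v 6 := by simp [huv, gamma_mulVec, b₆]
  refine ⟨u, hu, ?_, ?_⟩
  · have hα : alpha a (a ^ t) *ᵥ e 0 = e 0 := by
      rw [alpha_mulVec]; ext i; fin_cases i <;> simp
    have hβ : beta b (b ^ t) *ᵥ e 0 = e 0 := by
      rw [beta_mulVec]; ext i; fin_cases i <;> simp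
    have hγ : gamma c (c ^ t) *ᵥ e 0 = e 0 := by
      rw [gamma_mulVec]; ext i; fin_cases i <;> simp
    simp only [u, Units.val_mul, ← Matrix.mulVec_mulVec, coe_alphaGL, coe_betaGL, coe_gammaGL,
      hα, hβ, hγ]
  · rw [← c₆]
    refine hpoint.eq_smul_e6 ?_ ?_ ?_ (by rwa [c₆])
    · simp [huv, gamma_mulVec, b₆, hc, h₆]
    · simp [huv, gamma_mulVec, b₄]
    · simp [huv, gamma_mulVec, b₅]

theorem ups_mulVec_e0 : (ups : Matrix (Fin 7) (Fin 7) K) *ᵥ e 0 = -e 6 := by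
  rw [ups_mulVec]; ext i; fin_cases i <;> simp

theorem ups_mulVec_e6 : (ups : Matrix (Fin 7) (Fin 7) K) *ᵥ e 6 = -e 0 := by
  rw [ups_mulVec]; ext i; fin_cases i <;> simp

theorem mem_reeGroup_of_mulVec_e0_e6 [CharP K 3] (ht : Twist t φ) {g : GL (Fin 7) K}
    (hg : g ∈ twistedFixed φ) {c d : K} (h₀ : g.val *ᵥ e 0 = c • e 0)
    (h₆ : g.val *ᵥ e 6 = d • e 6) : g ∈ ReeGroup t := by
  obtain ⟨y, z, rfl, hy, hz⟩ := exists_eq_torusGL_of_mem_twistedFixed hg h₀ h₆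
  obtain ⟨l, rfl, rfl⟩ := ht.exists_eq_of_map_eq hy hz
  exact torusGL_mem_reeGroup t l

theorem mem_reeGroup_of_mulVec_e0 [CharP K 3] (ht : Twist t φ) {g : GL (Fin 7) K}
    (hg : g ∈ twistedFixed φ) {c : K} (h₀ : g.val *ᵥ e 0 = c • e 0) : g ∈ ReeGroup t := by
  have hups := reeGroup_le_twistedFixed ht (upsGL_mem_reeGroup t)
  have h₆₆ : (g.val *ᵥ e 6) 6 ≠ 0 := by
    have := form_mulVec (mem_crossAut_of_mem_twistedFixed hg) (e 0) (e 6)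
    rw [h₀] at this
    intro h
    simp [form] at this h
    simp [h] at this
  have hpoint : IsOvoidVector φ (-(g.val *ᵥ e 6)) := by
    have := (isOvoidVector_e0.mulVec hups).mulVec hg
    rwa [coe_upsGL, ups_mulVec_e0, Matrix.mulVec_neg] at this
  obtain ⟨u, hu, hu₀, hu₆⟩ := exists_mem_reeGroup_mulVec_eq_smul_e6 ht hpoint (by simpa using h₆₆)
  rw [Matrix.mulVec_neg, neg_eq_iff_eq_neg, ← neg_smul] at hu₆
  have hug : u * g ∈ ReeGroup t := by
    refine mem_reeGroup_of_mulVec_e0_e6 ht (mul_mem (reeGroup_le_twistedFixed ht hu) hg) (c := c)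
      ?_ ((Matrix.mulVec_mulVec _ _ _).symm.trans hu₆)
    rw [Units.val_mul, ← Matrix.mulVec_mulVec, h₀, Matrix.mulVec_smul, hu₀]
  exact (mul_mem_cancel_left hu).1 hug

theorem twistedFixed_eq_reeGroup [CharP K 3] (ht : Twist t φ) : twistedFixed φ = ReeGroup t := by
  refine le_antisymm (fun g hg => ?_) (reeGroup_le_twistedFixed ht)
  have hpoint : IsOvoidVector φ (g.val *ᵥ e 0) := isOvoidVector_e0.mulVec hg
  by_cases h₆ : (g.val *ᵥ e 0) 6 = 0
  · exact mem_reeGroup_of_mulVec_e0 ht hg (hpoint.eq_smul_e0 h₆)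
  · obtain ⟨u, hu, -, hu₆⟩ := exists_mem_reeGroup_mulVec_eq_smul_e6 ht hpoint h₆
    have hw : upsGL * u ∈ ReeGroup (F := K) t := mul_mem (upsGL_mem_reeGroup t) hu
    refine (mul_mem_cancel_left hw).1 (mem_reeGroup_of_mulVec_e0 ht
      (mul_mem (reeGroup_le_twistedFixed ht hw) hg) (c := -(g.val *ᵥ e 0) 6) ?_)
    rw [Units.val_mul, Units.val_mul, ← Matrix.mulVec_mulVec, ← Matrix.mulVec_mulVec, hu₆,
      Matrix.mulVec_smul, coe_upsGL, ups_mulVec_e6, smul_neg, neg_smul]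

end Ree

section IsConjIn

variable {G : Type*} [Group G] {H : Subgroup G} {a b c : G}

/-- `a` and `b` are conjugate in the ambient group by an element of `H`; they need not lie in
`H`. -/
def IsConjIn (H : Subgroup G) (a b : G) : Prop :=
  ∃ x ∈ H, SemiconjBy x a b

theorem IsConjIn.symm (h : IsConjIn H a b) : IsConjIn H b a := by
  obtain ⟨x, hx, hab⟩ := h
  exact ⟨x⁻¹, inv_mem hx, hab.inv_symm_left⟩

theorem IsConjIn.trans (h : IsConjIn H a b) (h' : IsConjIn H b c) : IsConjIn H a c := by
  obtain ⟨x, hx, hab⟩ := h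
  obtain ⟨y, hy, hbc⟩ := h'
  exact ⟨y * x, mul_mem hy hx, hbc.mul_left hab⟩

theorem isConjIn_conj {x : G} (hx : x ∈ H) (a : G) : IsConjIn H a (x * a * x⁻¹) :=
  ⟨x, hx, by simp [SemiconjBy]⟩

end IsConjIn

section TorusRelations

theorem GL_ext_mulVec {g h : GL (Fin 7) K} (H : ∀ v, g.val *ᵥ v = h.val *ᵥ v) : g = h :=
  Units.ext (Matrix.ext_of_mulVec_single fun _ => H _)

theorem torusGL_mul (y z y' z' : Kˣ) :
    torusGL y z * torusGL y' z' = torusGL (y * y') (z * z') := by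
  refine GL_ext_mulVec fun v => ?_
  simp only [Units.val_mul, ← Matrix.mulVec_mulVec, coe_torusGL, torus_mulVec]
  ext i
  fin_cases i <;> simp <;> ring

theorem torusGL_one_one : torusGL 1 1 = (1 : GL (Fin 7) K) := by
  refine GL_ext_mulVec fun v => ?_
  simp only [coe_torusGL, torus_mulVec]
  ext i
  fin_cases i <;> simp

theorem torusGL_mul_upsGL (y z : Kˣ) : torusGL y z * upsGL = upsGL * torusGL y⁻¹ z⁻¹ := by
  refine GL_ext_mulVec fun v => ?_
  simp only [Units.val_mul, ← Matrix.mulVec_mulVec, coe_torusGL, coe_upsGL, torus_mulVec,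
    ups_mulVec]
  ext i
  fin_cases i <;> simp [Fin.rev]

theorem upsGL_mul_upsGL : upsGL * upsGL = (1 : GL (Fin 7) K) := by
  refine GL_ext_mulVec fun v => ?_
  simp only [Units.val_mul, ← Matrix.mulVec_mulVec, coe_upsGL, ups_mulVec]
  ext i
  simp

theorem upsGL_inv : (upsGL : GL (Fin 7) K)⁻¹ = upsGL :=
  inv_eq_of_mul_eq_one_right upsGL_mul_upsGL

end TorusRelations

section Involutions

theorem semiconjBy_torusGL_upsGL [CharP K 3] :
    SemiconjBy (alphaGL 1 1 * upsGL * alphaGL (-1) (-1)) (torusGL 1 (-1)) (upsGL (K := K)) := by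
  refine GL_ext_mulVec fun v => ?_
  simp only [Units.val_mul, ← Matrix.mulVec_mulVec, coe_torusGL, coe_upsGL, coe_alphaGL,
    torus_mulVec, ups_mulVec, alpha_mulVec]
  ext i
  fin_cases i <;> simp [Fin.rev] <;> grind

theorem semiconjBy_torusGL_upsGL_mul_torusGL [CharP K 3] :
    SemiconjBy (alphaGL 1 1 * gammaGL (-1) (-1) * upsGL * gammaGL 1 1) (torusGL 1 (-1))
      (upsGL * torusGL (K := K) 1 (-1)) := by
  refine GL_ext_mulVec fun v => ?_
  simp only [Units.val_mul, ← Matrix.mulVec_mulVec, coe_torusGL, coe_upsGL, coe_alphaGL,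
    coe_gammaGL, torus_mulVec, ups_mulVec, alpha_mulVec, gamma_mulVec]
  ext i
  fin_cases i <;> simp [Fin.rev] <;> grind

variable {t : ℕ} {φ : K →+* K}

theorem isConjIn_upsGL_mul_torusGL [CharP K 3] (hodd : Odd t) (m : Kˣ) {ε : Kˣ}
    (hε : ε = 1 ∨ ε = -1) :
    IsConjIn (ReeGroup (F := K) t)
      (upsGL * torusGL (ε * m ^ 2 * ((ε * m ^ 2) ^ t)⁻¹) (((ε * m ^ 2) ^ t) ^ 2 * (ε * m ^ 2)⁻¹))
      (torusGL 1 (-1)) := by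
  have hεt : ε ^ t = ε := by rcases hε with rfl | rfl <;> simp [hodd.neg_one_pow]
  have hεε : ε * ε = 1 := by rcases hε with rfl | rfl <;> simp
  have hεinv : ε⁻¹ = ε := inv_eq_of_mul_eq_one_right hεε
  have htorus : SemiconjBy (torusGL (m * (m ^ t)⁻¹) ((m ^ t) ^ 2 * m⁻¹))
      (upsGL * torusGL (ε * m ^ 2 * ((ε * m ^ 2) ^ t)⁻¹)
        (((ε * m ^ 2) ^ t) ^ 2 * (ε * m ^ 2)⁻¹)) (upsGL * torusGL 1 ε) := by
    rw [SemiconjBy, ← mul_assoc, torusGL_mul_upsGL, mul_assoc upsGL,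
      mul_assoc upsGL _ (torusGL _ _),
      torusGL_mul, torusGL_mul, mul_pow, hεt, ← pow_mul, mul_comm 2 t, pow_mul]
    generalize m ^ t = k
    congr 2 <;> · ext; push_cast; field_simp
  refine IsConjIn.trans ⟨_, torusGL_mem_reeGroup t m, htorus⟩ (IsConjIn.symm ?_)
  have hα := alphaGL_mem_reeGroup t (1 : K)
  have hα' := alphaGL_mem_reeGroup t (-1 : K)
  have hγ := gammaGL_mem_reeGroup t (1 : K)
  have hγ' := gammaGL_mem_reeGroup t (-1 : K)
  rw [hodd.neg_one_pow] at hα' hγ'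
  rw [one_pow] at hα hγ
  have hups := upsGL_mem_reeGroup (K := K) t
  rcases hε with rfl | rfl
  · rw [torusGL_one_one, mul_one]
    exact ⟨_, mul_mem (mul_mem hα hups) hα', semiconjBy_torusGL_upsGL⟩
  · exact ⟨_, mul_mem (mul_mem (mul_mem hα hγ') hups) hγ, semiconjBy_torusGL_upsGL_mul_torusGL⟩

variable [CharP K 3] {g : GL (Fin 7) K}

theorem eq_torusGL_of_mul_self (hg : g ∈ twistedFixed φ) (hgg : g * g = 1) (hne : g ≠ 1)
    {c d : K} (h₀ : g.val *ᵥ e 0 = c • e 0) (h₆ : g.val *ᵥ e 6 = d • e 6) :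
    g = torusGL 1 (-1) := by
  obtain ⟨y, z, rfl, -, hz⟩ := exists_eq_torusGL_of_mem_twistedFixed hg h₀ h₆
  rw [torusGL_mul, ← torusGL_one_one, torusGL_inj] at hgg
  have hz' : z = 1 ∨ z = -1 := by
    have := mul_self_eq_one_iff.1 (congrArg Units.val hgg.2)
    exact this.imp Units.ext Units.ext
  obtain rfl : y = 1 := by
    rcases hz' with rfl | rfl
    · simpa [eq_comm] using hz
    · have hφ : Units.map (φ : K →* K) (-1) = -1 := Units.ext (by simp)
      simpa [hφ] using hz.symm
  rcases hz' with rfl | rfl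
  · exact absurd torusGL_one_one hne
  · rfl

theorem isConjIn_of_mulVec_e0_eq_smul_e6 (ht : Twist t φ) (hodd : Odd t)
    (hsq : ∀ l : Kˣ, ∃ m : Kˣ, l = m ^ 2 ∨ l = -m ^ 2) (hg : g ∈ ReeGroup t) (hgg : g * g = 1)
    {c : K} (h₀ : g.val *ᵥ e 0 = c • e 6) : IsConjIn (ReeGroup t) g (torusGL 1 (-1)) := by
  have hc : c ≠ 0 := ne_zero_of_mulVec_eq_smul (e_ne_zero 0) h₀
  have h₆ : g.val *ᵥ e 6 = c⁻¹ • e 0 := by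
    rw [← inv_smul_smul₀ hc (e 6), ← h₀, Matrix.mulVec_smul, Matrix.mulVec_mulVec,
      ← Units.val_mul, hgg, Units.val_one, Matrix.one_mulVec]
  have hug : upsGL * g ∈ twistedFixed φ :=
    reeGroup_le_twistedFixed ht (mul_mem (upsGL_mem_reeGroup t) hg)
  obtain ⟨y, z, hyz, hy, hz⟩ := exists_eq_torusGL_of_mem_twistedFixed hug (c := -c) (d := -c⁻¹)
    (by rw [Units.val_mul, ← Matrix.mulVec_mulVec, h₀, Matrix.mulVec_smul, coe_upsGL,
      ups_mulVec_e6, smul_neg, neg_smul])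
    (by rw [Units.val_mul, ← Matrix.mulVec_mulVec, h₆, Matrix.mulVec_smul, coe_upsGL,
      ups_mulVec_e0, smul_neg, neg_smul])
  obtain ⟨l, rfl, rfl⟩ := ht.exists_eq_of_map_eq hy hz
  have hg' : g = upsGL * torusGL (l * (l ^ t)⁻¹) ((l ^ t) ^ 2 * l⁻¹) := by
    rw [← hyz, ← mul_assoc, upsGL_mul_upsGL, one_mul]
  rw [hg']
  obtain ⟨m, rfl | rfl⟩ := hsq l
  · simpa using isConjIn_upsGL_mul_torusGL hodd m (.inl rfl)
  · simpa using isConjIn_upsGL_mul_torusGL hodd m (.inr rfl)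

theorem isConjIn_of_mulVec_e0_six_ne_zero (ht : Twist t φ) (hodd : Odd t)
    (hsq : ∀ l : Kˣ, ∃ m : Kˣ, l = m ^ 2 ∨ l = -m ^ 2) (hg : g ∈ ReeGroup t) (hgg : g * g = 1)
    (h₀₆ : (g.val *ᵥ e 0) 6 ≠ 0) : IsConjIn (ReeGroup t) g (torusGL 1 (-1)) := by
  obtain ⟨u, hu, hu₀, hu₆⟩ := exists_mem_reeGroup_mulVec_eq_smul_e6 ht
    (isOvoidVector_e0.mulVec (reeGroup_le_twistedFixed ht hg)) h₀₆
  have huinv : u⁻¹.val *ᵥ e 0 = e 0 := by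
    simpa only [hu₀] using inv_mulVec_mulVec u (e 0)
  refine (isConjIn_conj hu g).trans (isConjIn_of_mulVec_e0_eq_smul_e6 ht hodd hsq
    (mul_mem (mul_mem hu hg) (inv_mem hu)) ?_ (c := (g.val *ᵥ e 0) 6) ?_)
  · rw [← pow_two, conj_pow, pow_two, hgg, mul_one, mul_inv_cancel]
  · rw [Units.val_mul, Units.val_mul, ← Matrix.mulVec_mulVec, ← Matrix.mulVec_mulVec, huinv, hu₆]

theorem isConjIn_torusGL_of_mul_self (ht : Twist t φ) (hodd : Odd t)
    (hsq : ∀ l : Kˣ, ∃ m : Kˣ, l = m ^ 2 ∨ l = -m ^ 2) (hg : g ∈ ReeGroup t) (hgg : g * g = 1)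
    (hne : g ≠ 1) : IsConjIn (ReeGroup t) g (torusGL 1 (-1)) := by
  have hups := upsGL_mem_reeGroup (K := K) t
  have hgφ := reeGroup_le_twistedFixed ht hg
  by_cases h₀₆ : (g.val *ᵥ e 0) 6 = 0
  swap
  · exact isConjIn_of_mulVec_e0_six_ne_zero ht hodd hsq hg hgg h₀₆
  have hconj : upsGL * g * upsGL⁻¹ ∈ ReeGroup t := mul_mem (mul_mem hups hg) (inv_mem hups)
  have hconj₀ : (upsGL * g * upsGL⁻¹).val *ᵥ e 0 = -(ups *ᵥ (g.val *ᵥ e 6)) := by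
    rw [upsGL_inv, Units.val_mul, Units.val_mul, ← Matrix.mulVec_mulVec, ← Matrix.mulVec_mulVec,
      coe_upsGL, ups_mulVec_e0, Matrix.mulVec_neg, Matrix.mulVec_neg]
  by_cases h₆₀ : ((upsGL * g * upsGL⁻¹).val *ᵥ e 0) 6 = 0
  · have h₀ := (isOvoidVector_e0.mulVec hgφ).eq_smul_e0 h₀₆
    have h₆ := (isOvoidVector_e0.mulVec (reeGroup_le_twistedFixed ht hconj)).eq_smul_e0 h₆₀
    rw [hconj₀] at h₆
    have h₆' := congrArg ((upsGL : GL (Fin 7) K)⁻¹.val *ᵥ ·) h₆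
    rw [Matrix.mulVec_neg, ← coe_upsGL, inv_mulVec_mulVec, Matrix.mulVec_smul, upsGL_inv,
      coe_upsGL, ups_mulVec_e0, smul_neg, neg_inj] at h₆'
    rw [eq_torusGL_of_mul_self hgφ hgg hne h₀ h₆']
    exact ⟨1, one_mem _, SemiconjBy.one_left _⟩
  · refine (isConjIn_conj hups g).trans
      (isConjIn_of_mulVec_e0_six_ne_zero ht hodd hsq hconj ?_ h₆₀)
    rw [← pow_two, conj_pow, pow_two, hgg, mul_one, mul_inv_cancel]

end Involutions

section FixedVectors

theorem exists_mulVec_eq_self_of_orthogonal {n : Type*} [Fintype n] [DecidableEq n]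
    (hn : Odd (Fintype.card n)) (h2 : (2 : K) ≠ 0) {M J : Matrix n n K} (hJ : J.det ≠ 0)
    (hMJ : Mᵀ * J * M = J) (hM : M.det = 1) : ∃ v ≠ 0, M *ᵥ v = v := by
  have hskew : Mᵀ * J * (M - 1) = -((M - 1)ᵀ * J) := by
    rw [mul_sub, hMJ, Matrix.transpose_sub, Matrix.transpose_one]
    noncomm_ring
  have hdet : (M - 1).det = 0 := by
    have h := congrArg Matrix.det hskew
    simp only [Matrix.det_neg, Matrix.det_mul, Matrix.det_transpose, hM, hn.neg_one_pow] at h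
    have h' : 2 * (M - 1).det * J.det = 0 := by linear_combination h
    simpa [h2, hJ] using h'
  obtain ⟨v, hv, hMv⟩ := Matrix.exists_mulVec_eq_zero_iff.2 hdet
  exact ⟨v, hv, by rwa [Matrix.sub_mulVec, Matrix.one_mulVec, sub_eq_zero] at hMv⟩

variable {V : Type*} [AddCommGroup V] [Module K V] {B : LinearMap.BilinForm K V}
  {f : Module.End K V} {n : ℕ} {v : V}

/- Averaging over the powers of `f` keeps the pairing with the fixed vector `v`, up to the
factor `n`. -/
theorem exists_fixed_pairing_ne_zero (hf : ∀ u w, B (f u) (f w) = B u w) (hfn : f ^ n = 1)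
    (hn : (n : K) ≠ 0) (hfv : f v = v) (hv : B v ≠ 0) : ∃ u, f u = u ∧ B v u ≠ 0 := by
  obtain ⟨w, hw⟩ := DFunLike.ne_iff.1 hv
  have hpow (k : ℕ) : B v ((f ^ k) w) = B v w := by
    induction k with
    | zero => rfl
    | succ k ih => rw [pow_succ', Module.End.mul_apply, ← ih, ← hf v ((f ^ k) w), hfv]
  refine ⟨(∑ k ∈ Finset.range n, f ^ k) w, ?_, ?_⟩
  · have h := congrArg (· w) (mul_geom_sum f n)
    simpa only [hfn, sub_self, Module.End.mul_apply, LinearMap.sub_apply, Module.End.one_apply,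
      LinearMap.zero_apply, sub_eq_zero] using h
  · simp only [LinearMap.sum_apply, map_sum, hpow, Finset.sum_const, Finset.card_range,
      nsmul_eq_mul]
    exact mul_ne_zero hn hw

theorem exists_fixed_anisotropic (hB : B.IsSymm) (h2 : (2 : K) ≠ 0)
    (hf : ∀ u w, B (f u) (f w) = B u w) (hfn : f ^ n = 1) (hn : (n : K) ≠ 0) (hfv : f v = v)
    (hv : B v ≠ 0) : ∃ u, f u = u ∧ B u u ≠ 0 := by
  obtain ⟨u, hfu, hvu⟩ := exists_fixed_pairing_ne_zero hf hfn hn hfv hv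
  by_contra! h
  have hadd := h (v + u) (by rw [map_add, hfv, hfu])
  simp only [map_add, LinearMap.add_apply, h v hfv, h u hfu, hB.eq u v, zero_add,
    add_zero, ← two_mul] at hadd
  exact hvu ((mul_eq_zero.1 hadd).resolve_left h2)

end FixedVectors

section Diagonalization

variable [IsAlgClosed K]

theorem exists_basis_eigenvectors_of_pow_eq_one {ι : Type*} [Fintype ι]
    [DecidableEq ι] {N : Matrix ι ι K} {n : ℕ} (hN : N ^ n = 1) (hn : (n : K) ≠ 0) :
    ∃ (b : Module.Basis ι K (ι → K)) (d : ι → K), ∀ i, N *ᵥ b i = d i • b i := by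
  have hss : Module.End.IsSemisimple (Matrix.toLin' N) :=
    Module.End.isSemisimple_of_squarefree_aeval_eq_zero
      (Polynomial.X_pow_sub_one_separable_iff.2 hn).squarefree
      (by simp [← Matrix.toLin'_pow, hN, ← Module.End.one_eq_id])
  have hspan : ⊤ ≤ Submodule.span K {v | ∃ μ : K, N *ᵥ v = μ • v} := by
    rw [← hss.iSup_eigenspace_eq_top]
    exact iSup_le fun μ v hv => Submodule.subset_span ⟨μ, Module.End.mem_eigenspace_iff.1 hv⟩
  let b₀ := Module.Basis.ofSpan hspan
  let b := b₀.reindex (b₀.indexEquiv (Pi.basisFun K ι))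
  have hb (i : ι) : ∃ μ : K, N *ᵥ b i = μ • b i :=
    Module.Basis.ofSpan_subset hspan (by simp [b, b₀])
  choose d hd using hb
  exact ⟨b, d, hd⟩

theorem exists_det_eq_one_mul_eq_mul_diagonal {ι : Type*} [Fintype ι] [DecidableEq ι]
    [Nonempty ι] {N : Matrix ι ι K} {n : ℕ} (hN : N ^ n = 1) (hn : (n : K) ≠ 0) :
    ∃ (Y : Matrix ι ι K) (d : ι → K), Y.det = 1 ∧ N * Y = Y * Matrix.diagonal d := by
  obtain ⟨b, d, hb⟩ := exists_basis_eigenvectors_of_pow_eq_one hN hn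
  set Y := (Pi.basisFun K ι).toMatrix b with hY
  have hdet : Y.det ≠ 0 := by
    rw [hY, ← Module.Basis.det_apply]
    exact ((Pi.basisFun K ι).isUnit_det b).ne_zero
  have hNY : N * Y = Y * Matrix.diagonal d := by
    refine Matrix.ext_of_mulVec_single fun i => ?_
    have hYi : Y *ᵥ Pi.single i 1 = b i := by ext; simp [hY, Module.Basis.toMatrix_apply]
    rw [← Matrix.mulVec_mulVec, ← Matrix.mulVec_mulVec, hYi, hb, Matrix.diagonal_mulVec_single,
      mul_one, ← hYi, ← Matrix.mulVec_smul, ← Pi.single_smul, smul_eq_mul, mul_one]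
  let c : ι → K := Function.update 1 (Classical.arbitrary ι) Y.det⁻¹
  refine ⟨Y * Matrix.diagonal c, d, ?_, ?_⟩
  · rw [Matrix.det_mul, Matrix.det_diagonal, Finset.prod_update_of_mem (Finset.mem_univ _)]
    simp [hdet]
  · rw [← mul_assoc, hNY, mul_assoc, mul_assoc, Matrix.diagonal_mul_diagonal,
      Matrix.diagonal_mul_diagonal]
    simp_rw [mul_comm]

end Diagonalization

section IsogenyDomain

/-- The group `G₂(K)`, as the set of first components of the graph of its exceptional isogeny. -/
def isogenyDomain (K : Type*) [Field K] : Subgroup (GL (Fin 7) K) :=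
  (isogenyGraph K).map (MonoidHom.fst _ _)

theorem IsogenyGenerator.fst_mem_isogenyDomain {p : GL (Fin 7) K × GL (Fin 7) K}
    (h : IsogenyGenerator p) : p.1 ∈ isogenyDomain K :=
  ⟨p, h.mem_isogenyGraph, rfl⟩

theorem alphaGL_mem_isogenyDomain (x X : K) : alphaGL x X ∈ isogenyDomain K :=
  (IsogenyGenerator.alpha x X).fst_mem_isogenyDomain

theorem betaGL_mem_isogenyDomain (x X : K) : betaGL x X ∈ isogenyDomain K :=
  (IsogenyGenerator.beta x X).fst_mem_isogenyDomain

theorem gammaGL_mem_isogenyDomain (x X : K) : gammaGL x X ∈ isogenyDomain K :=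
  (IsogenyGenerator.gamma x X).fst_mem_isogenyDomain

theorem torusGL_mem_isogenyDomain (y z : Kˣ) : torusGL y z ∈ isogenyDomain K :=
  (IsogenyGenerator.torus y z).fst_mem_isogenyDomain

theorem upsGL_mem_isogenyDomain : upsGL ∈ isogenyDomain K :=
  IsogenyGenerator.ups.fst_mem_isogenyDomain

theorem isogenyDomain_le_crossAut [CharP K 3] : isogenyDomain K ≤ crossAut K := by
  rintro _ ⟨p, hp, rfl⟩
  exact (isogenyGraph_le_compatiblePairs hp).1

theorem det_eq_one_of_mem_isogenyDomain {g : GL (Fin 7) K} (hg : g ∈ isogenyDomain K) :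
    g.val.det = 1 := by
  obtain ⟨p, hp, rfl⟩ := hg
  exact det_eq_one_of_mem_isogenyGraph hp

end IsogenyDomain

section Orbits

/-- Two vectors are in the same orbit of `G₂(K)`. -/
def SameOrbit (v w : Fin 7 → K) : Prop :=
  ∃ g ∈ isogenyDomain K, g.val *ᵥ v = w

variable {u v w : Fin 7 → K}

theorem SameOrbit.symm (h : SameOrbit v w) : SameOrbit w v := by
  obtain ⟨g, hg, rfl⟩ := h
  exact ⟨g⁻¹, inv_mem hg, inv_mulVec_mulVec g v⟩

theorem SameOrbit.trans (h : SameOrbit u v) (h' : SameOrbit v w) : SameOrbit u w := by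
  obtain ⟨g, hg, rfl⟩ := h
  obtain ⟨g', hg', rfl⟩ := h'
  exact ⟨g' * g, mul_mem hg' hg, by rw [Units.val_mul, ← Matrix.mulVec_mulVec]⟩

theorem sameOrbit_alpha (x X : K) (v : Fin 7 → K) : SameOrbit v (alpha x X *ᵥ v) :=
  ⟨_, alphaGL_mem_isogenyDomain x X, rfl⟩

theorem sameOrbit_beta (x X : K) (v : Fin 7 → K) : SameOrbit v (beta x X *ᵥ v) :=
  ⟨_, betaGL_mem_isogenyDomain x X, rfl⟩

theorem sameOrbit_gamma (x X : K) (v : Fin 7 → K) : SameOrbit v (gamma x X *ᵥ v) :=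
  ⟨_, gammaGL_mem_isogenyDomain x X, rfl⟩

theorem sameOrbit_ups (v : Fin 7 → K) : SameOrbit v (ups *ᵥ v) :=
  ⟨_, upsGL_mem_isogenyDomain, rfl⟩

theorem exists_sameOrbit_apply_six_ne_zero (hv : v ≠ 0) : ∃ w, SameOrbit v w ∧ w 6 ≠ 0 := by
  by_contra! h₆
  have h₀ {w} (hw : SameOrbit v w) : w 0 = 0 := by
    simpa [ups_mulVec] using h₆ _ (hw.trans (sameOrbit_ups w))
  have h₄ {w} (hw : SameOrbit v w) : w 4 = 0 := by
    simpa [beta_mulVec, h₀ hw] using h₀ (hw.trans (sameOrbit_beta 1 0 w))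
  have h₅ {w} (hw : SameOrbit v w) : w 5 = 0 := by
    simpa [gamma_mulVec, h₀ hw] using h₀ (hw.trans (sameOrbit_gamma 1 0 w))
  have h₁ {w} (hw : SameOrbit v w) : w 1 = 0 := by
    simpa [ups_mulVec, Fin.rev] using h₅ (hw.trans (sameOrbit_ups w))
  have h₂ {w} (hw : SameOrbit v w) : w 2 = 0 := by
    simpa [ups_mulVec, Fin.rev] using h₄ (hw.trans (sameOrbit_ups w))
  have h₃ {w} (hw : SameOrbit v w) : w 3 = 0 := by
    simpa [alpha_mulVec, h₂ hw, h₄ hw] using h₂ (hw.trans (sameOrbit_alpha 0 1 w))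
  have hvv : SameOrbit v v := ⟨1, one_mem _, by simp⟩
  refine hv (funext fun i => ?_)
  fin_cases i
  exacts [h₀ hvv, h₁ hvv, h₂ hvv, h₃ hvv, h₄ hvv, h₅ hvv, h₆ v hvv]

theorem SameOrbit.form_eq [CharP K 3] (h : SameOrbit v w) : form w w = form v v := by
  obtain ⟨g, hg, rfl⟩ := h
  exact form_mulVec (isogenyDomain_le_crossAut hg) v v

theorem exists_sameOrbit_apply_eq_zero (h₆ : v 6 ≠ 0) :
    ∃ w, SameOrbit v w ∧ w 6 = v 6 ∧ w 5 = 0 ∧ w 4 = 0 ∧ w 3 = 0 ∧ w 2 = 0 ∧ w 1 = 0 := by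
  obtain ⟨v₁, ho₁, h₁₆, h₁₅⟩ : ∃ w, SameOrbit v w ∧ w 6 = v 6 ∧ w 5 = 0 :=
    ⟨_, sameOrbit_alpha 0 (v 5 / v 6) v, by simp [alpha_mulVec], by simp [alpha_mulVec, h₆]⟩
  rw [← h₁₆] at h₆ ⊢
  obtain ⟨v₂, ho₂, h₂₆, h₂₅, h₂₄⟩ : ∃ w, SameOrbit v w ∧ w 6 = v₁ 6 ∧ w 5 = 0 ∧ w 4 = 0 :=
    ⟨_, ho₁.trans (sameOrbit_beta 0 (-(v₁ 4 / v₁ 6)) v₁), by simp [beta_mulVec],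
      by simp [beta_mulVec, h₁₅], by simp [beta_mulVec, h₆]⟩
  rw [← h₂₆] at h₆ ⊢
  obtain ⟨v₃, ho₃, h₃₆, h₃₅, h₃₄, h₃₃⟩ :
      ∃ w, SameOrbit v w ∧ w 6 = v₂ 6 ∧ w 5 = 0 ∧ w 4 = 0 ∧ w 3 = 0 :=
    ⟨_, ho₂.trans (sameOrbit_gamma 0 (v₂ 3 / v₂ 6) v₂), by simp [gamma_mulVec],
      by simp [gamma_mulVec, h₂₅], by simp [gamma_mulVec, h₂₄], by simp [gamma_mulVec, h₆]⟩
  rw [← h₃₆] at h₆ ⊢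
  obtain ⟨v₄, ho₄, h₄₆, h₄₅, h₄₄, h₄₃, h₄₂⟩ :
      ∃ w, SameOrbit v w ∧ w 6 = v₃ 6 ∧ w 5 = 0 ∧ w 4 = 0 ∧ w 3 = 0 ∧ w 2 = 0 :=
    ⟨_, ho₃.trans (sameOrbit_beta (-(v₃ 2 / v₃ 6)) 0 v₃), by simp [beta_mulVec],
      by simp [beta_mulVec, h₃₅], by simp [beta_mulVec, h₃₄], by simp [beta_mulVec, h₃₃],
      by simp [beta_mulVec, h₆]⟩
  rw [← h₄₆] at h₆ ⊢
  exact ⟨_, ho₄.trans (sameOrbit_gamma (-(v₄ 1 / v₄ 6)) 0 v₄), by simp [gamma_mulVec],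
    by simp [gamma_mulVec, h₄₅], by simp [gamma_mulVec, h₄₄], by simp [gamma_mulVec, h₄₃],
    by simp [gamma_mulVec, h₄₂], by simp [gamma_mulVec, h₆]⟩

variable [CharP K 3]

theorem sameOrbit_of_form_eq_neg_one (hv : form v v = -1) : SameOrbit v (e 0 + e 6) := by
  obtain ⟨u, hou, hu⟩ := exists_sameOrbit_apply_six_ne_zero
    (v := v) (by rintro rfl; simp at hv)
  obtain ⟨w, how, h₆, h₅, h₄, h₃, h₂, h₁⟩ := exists_sameOrbit_apply_eq_zero hu
  rw [← h₆] at hu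
  have hform : w 0 * w 6 = 1 := by
    have h := (hou.trans how).form_eq.trans hv
    simp only [form, LinearMap.mk₂_apply, h₁, h₂, h₃, h₄, h₅] at h
    grind
  refine (hou.trans how).trans ⟨_, torusGL_mem_isogenyDomain (Units.mk0 (w 6) hu) 1, ?_⟩
  ext i
  fin_cases i <;> simp [torus_mulVec, h₁, h₂, h₃, h₄, h₅, hu, mul_comm (w 6), hform]

theorem sameOrbit_e3 (hv : form v v = -1) : SameOrbit v (e 3) :=
  (sameOrbit_of_form_eq_neg_one hv).trans (sameOrbit_of_form_eq_neg_one (by simp [form])).symm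

end Orbits

section SpecialLinearSubgroup

/-- `g` fixes `e 3` and acts on the coordinates `1, 2, 6`, the weights of grade one, by the matrix
`Y`. The elements of `G₂(K)` fixing `e 3` form a copy of `SL₃(K)`, parametrized by `Y`. -/
structure ActsAs (g : GL (Fin 7) K) (Y : Matrix (Fin 3) (Fin 3) K) : Prop where
  mulVec_e3 : g.val *ᵥ e 3 = e 3
  mulVec_comp : ∀ v, (g.val *ᵥ v) ∘ ![1, 2, 6] = Y *ᵥ (v ∘ ![1, 2, 6])

variable {g h : GL (Fin 7) K} {Y Z : Matrix (Fin 3) (Fin 3) K}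

theorem ActsAs.mul (hg : ActsAs g Y) (hh : ActsAs h Z) : ActsAs (g * h) (Y * Z) where
  mulVec_e3 := by
    rw [Units.val_mul, ← Matrix.mulVec_mulVec, hh.mulVec_e3, hg.mulVec_e3]
  mulVec_comp v := by
    rw [Units.val_mul, ← Matrix.mulVec_mulVec, hg.mulVec_comp, hh.mulVec_comp,
      Matrix.mulVec_mulVec]

theorem ActsAs.unique (hY : ActsAs g Y) (hZ : ActsAs g Z) : Y = Z := by
  refine Matrix.ext_of_mulVec_single fun i => ?_
  have hi : (Pi.single i 1 : Fin 3 → K) = e (![1, 2, 6] i) ∘ ![1, 2, 6] := by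
    ext j; fin_cases i <;> fin_cases j <;> simp
  rw [hi, ← hY.mulVec_comp, hZ.mulVec_comp]

theorem ActsAs.pow_eq_one {n : ℕ} (hY : ActsAs g Y) (hgn : g ^ n = 1) : Y ^ n = 1 := by
  have hone : ActsAs (1 : GL (Fin 7) K) 1 :=
    ⟨by rw [Units.val_one, Matrix.one_mulVec], fun v => by simp⟩
  have hpow (k : ℕ) : ActsAs (g ^ k) (Y ^ k) := by
    induction k with
    | zero => simpa using hone
    | succ k ih => simpa only [pow_succ] using ih.mul hY
  exact (hgn ▸ hpow n).unique hone

theorem actsAs_torusGL (y z : Kˣ) :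
    ActsAs (torusGL y z) (Matrix.diagonal ![(y : K), z, (y : K)⁻¹ * (z : K)⁻¹]) where
  mulVec_e3 := by
    rw [coe_torusGL, torus_mulVec]
    ext i; fin_cases i <;> simp
  mulVec_comp v := by
    ext i; fin_cases i <;> simp [torus_mulVec, Matrix.mulVec_diagonal]

theorem exists_actsAs_transvection (t : Matrix.TransvectionStruct (Fin 3) K) :
    ∃ g ∈ isogenyDomain K, ActsAs g t.toMatrix := by
  obtain ⟨i, j, hij, c⟩ := t
  have hups {g : GL (Fin 7) K} (hg : g ∈ isogenyDomain K) :
      upsGL * g * upsGL ∈ isogenyDomain K :=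
    mul_mem (mul_mem upsGL_mem_isogenyDomain hg) upsGL_mem_isogenyDomain
  let x : Fin 3 → Fin 3 → GL (Fin 7) K := ![
    ![1, alphaGL c 0, gammaGL c 0],
    ![upsGL * alphaGL (-c) 0 * upsGL, 1, betaGL c 0],
    ![upsGL * gammaGL (-c) 0 * upsGL, upsGL * betaGL (-c) 0 * upsGL, 1]]
  refine ⟨x i j, ?_, ?_, fun v => ?_⟩
  · fin_cases i <;> fin_cases j
    exacts [one_mem _, alphaGL_mem_isogenyDomain _ _, gammaGL_mem_isogenyDomain _ _,
      hups (alphaGL_mem_isogenyDomain _ _), one_mem _, betaGL_mem_isogenyDomain _ _,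
      hups (gammaGL_mem_isogenyDomain _ _), hups (betaGL_mem_isogenyDomain _ _), one_mem _]
  · fin_cases i <;> fin_cases j <;> first | exact absurd rfl hij | skip
    all_goals
      simp only [x, Fin.zero_eta, Fin.mk_one, Fin.reduceFinMk, Matrix.cons_val, Units.val_mul,
        ← Matrix.mulVec_mulVec, coe_upsGL, coe_alphaGL, coe_betaGL, coe_gammaGL, ups_mulVec,
        alpha_mulVec, beta_mulVec, gamma_mulVec]
      ext k
      fin_cases k <;> simp [Fin.rev]
  · simp only [Matrix.TransvectionStruct.toMatrix, Matrix.transvection, Matrix.add_mulVec,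
      Matrix.one_mulVec, Matrix.single_mulVec]
    ext k
    fin_cases i <;> fin_cases j <;> first | exact absurd rfl hij | skip
    all_goals
      fin_cases k <;>
        simp [x, ← Matrix.mulVec_mulVec, ups_mulVec, alpha_mulVec, beta_mulVec, gamma_mulVec,
          Fin.rev, add_comm]

theorem exists_actsAs_of_det_eq_one (hY : Y.det = 1) : ∃ g ∈ isogenyDomain K, ActsAs g Y := by
  refine Matrix.diagonal_transvection_induction
    (fun Y => ∃ g ∈ isogenyDomain K, ActsAs g Y) Y (fun d hd => ?_) exists_actsAs_transvection ?_
  · rw [hY, Matrix.det_diagonal, Fin.prod_univ_three] at hd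
    have h₀ : d 0 ≠ 0 := by rintro h; simp [h] at hd
    have h₁ : d 1 ≠ 0 := by rintro h; simp [h] at hd
    refine ⟨_, torusGL_mem_isogenyDomain (Units.mk0 _ h₀) (Units.mk0 _ h₁), ?_⟩
    convert actsAs_torusGL _ _ using 2
    ext i
    fin_cases i
    · rfl
    · rfl
    · exact (eq_inv_of_mul_eq_one_right hd).trans (mul_inv _ _)
  · rintro A B ⟨g, hg, hgA⟩ ⟨h, hh, hhB⟩
    exact ⟨g * h, mul_mem hg hh, hgA.mul hhB⟩

variable [CharP K 3]

theorem exists_eq_of_grade_eq_one {i : Fin 7} (hi : grade i = 1) :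
    ∃ j, ![1, 2, 6] j = i := by
  revert i; decide

theorem exists_actsAs (hg : g ∈ crossAut K) (h₃ : g.val *ᵥ e 3 = e 3) : ∃ Y, ActsAs g Y := by
  refine ⟨g.val.submatrix ![1, 2, 6] ![1, 2, 6], h₃, fun v => ?_⟩
  ext i
  have hzero {k : Fin 7} (hk : grade k ≠ 1) : g.val (![1, 2, 6] i) k = 0 := by
    refine apply_eq_zero_of_grade_ne hg h₃ ?_
    fin_cases i <;> exact hk.symm
  simp [Matrix.mulVec, dotProduct, Fin.sum_univ_seven, Fin.sum_univ_three,
    hzero (show grade 0 ≠ 1 by decide), hzero (show grade 3 ≠ 1 by decide),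
    hzero (show grade 4 ≠ 1 by decide), hzero (show grade 5 ≠ 1 by decide)]

theorem ActsAs.mulVec_e_of_diagonal {d : Fin 3 → K} (hg : g ∈ crossAut K)
    (hd : ActsAs g (Matrix.diagonal d)) (j : Fin 3) :
    g.val *ᵥ e (![1, 2, 6] j) = d j • e (![1, 2, 6] j) := by
  ext i
  by_cases hi : grade i = 1
  · obtain ⟨k, rfl⟩ := exists_eq_of_grade_eq_one hi
    have h := congrFun (hd.mulVec_comp (e (![1, 2, 6] j))) k
    rw [Function.comp_apply, Matrix.mulVec_diagonal] at h
    rw [h]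
    fin_cases j <;> fin_cases k <;> simp
  · rw [mulVec_e, apply_eq_zero_of_grade_ne hg hd.mulVec_e3]
    · fin_cases j <;> fin_cases i <;> simp [grade] at hi ⊢
    · fin_cases j <;> exact hi

theorem ActsAs.exists_eq_torusGL {d : Fin 3 → K} (hg : g ∈ crossAut K)
    (hd : ActsAs g (Matrix.diagonal d)) :
    ∃ y z, g = torusGL y z ∧ d = ![(y : K), z, (y : K)⁻¹ * (z : K)⁻¹] := by
  have h := hd.mulVec_e_of_diagonal hg
  obtain ⟨y, z, rfl⟩ := ReePaper.exists_eq_torusGL hg (h 0) (h 1) (h 2)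
  exact ⟨y, z, rfl, Matrix.diagonal_injective (hd.unique (actsAs_torusGL y z))⟩

theorem ActsAs.isConjIn_torusGL {d : Fin 3 → K} (hg : g ∈ crossAut K) (hgZ : ActsAs g Z)
    (hY : Y.det = 1) (hZY : Z * Y = Y * Matrix.diagonal d) :
    ∃ y z, IsConjIn (isogenyDomain K) g (torusGL y z) ∧
      d = ![(y : K), z, (y : K)⁻¹ * (z : K)⁻¹] := by
  obtain ⟨x, hx, hxY⟩ := exists_actsAs_of_det_eq_one hY
  have hk : x⁻¹ * g * x ∈ crossAut K :=
    have hx' := isogenyDomain_le_crossAut hx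
    mul_mem (mul_mem (inv_mem hx') hg) hx'
  have hk₃ : (x⁻¹ * g * x).val *ᵥ e 3 = e 3 := by
    rw [Units.val_mul, Units.val_mul, ← Matrix.mulVec_mulVec, ← Matrix.mulVec_mulVec,
      hxY.mulVec_e3, hgZ.mulVec_e3]
    nth_rw 1 [← hxY.mulVec_e3]
    exact inv_mulVec_mulVec x _
  obtain ⟨M, hM⟩ := exists_actsAs hk hk₃
  have hYM : Y * M = Y * Matrix.diagonal d := by
    refine (hxY.mul hM).unique ?_
    rw [← hZY, mul_assoc x⁻¹, mul_inv_cancel_left]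
    exact hgZ.mul hxY
  have hY' : IsUnit Y := (Matrix.isUnit_iff_isUnit_det Y).2 (hY ▸ isUnit_one)
  obtain ⟨y, z, hyz, hd⟩ := ActsAs.exists_eq_torusGL hk (hY'.mul_left_cancel hYM ▸ hM)
  refine ⟨y, z, IsConjIn.symm ⟨x, hx, ?_⟩, hd⟩
  rw [← hyz, SemiconjBy]
  group

end SpecialLinearSubgroup

section Semisimple

variable {g : GL (Fin 7) K}

theorem form_isSymm : (form : LinearMap.BilinForm K (Fin 7 → K)).IsSymm :=
  ⟨fun u v => by simp only [form, LinearMap.mk₂_apply]; ring⟩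

theorem form_nondegenerate : (form : LinearMap.BilinForm K (Fin 7 → K)).Nondegenerate := by
  refine .ofSeparatingLeft fun v hv => funext fun i => ?_
  have h := hv (e i.rev)
  fin_cases i <;> simpa [form, Fin.rev] using h

variable [CharP K 3]

theorem exists_mulVec_eq_self (hg : g ∈ isogenyDomain K) : ∃ v ≠ 0, g.val *ᵥ v = v := by
  have h2 : (2 : K) ≠ 0 := by grind
  refine exists_mulVec_eq_self_of_orthogonal (by decide) h2
    (Matrix.nondegenerate_iff_det_ne_zero.1 form_nondegenerate.toMatrix') ?_
    (det_eq_one_of_mem_isogenyDomain hg)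
  rw [← LinearMap.toMatrix'_toLin' g.val, ← LinearMap.BilinForm.toMatrix'_comp]
  refine congrArg LinearMap.BilinForm.toMatrix' (LinearMap.ext₂ fun u v => ?_)
  rw [LinearMap.BilinForm.comp_apply, Matrix.toLin'_apply, Matrix.toLin'_apply,
    form_mulVec (isogenyDomain_le_crossAut hg)]

variable [IsAlgClosed K] {n : ℕ}

theorem exists_mulVec_eq_self_form_eq_neg_one (hg : g ∈ isogenyDomain K) (hgn : g ^ n = 1)
    (hn : (n : K) ≠ 0) : ∃ v, g.val *ᵥ v = v ∧ form v v = -1 := by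
  obtain ⟨v, hv, hgv⟩ := exists_mulVec_eq_self hg
  have hpow : (Matrix.toLin' g.val) ^ n = 1 := by
    rw [← Matrix.toLin'_pow, ← Units.val_pow_eq_pow_val, hgn, Units.val_one, Matrix.toLin'_one]
    rfl
  obtain ⟨u, hgu, hu⟩ := exists_fixed_anisotropic form_isSymm (by grind)
    (form_mulVec (isogenyDomain_le_crossAut hg)) hpow hn hgv
    fun h => hv (form_nondegenerate.1 v fun w => by rw [h, LinearMap.zero_apply])
  obtain ⟨c, hc⟩ := IsAlgClosed.exists_pow_nat_eq (-(form u u)⁻¹) two_pos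
  refine ⟨c • u, ?_, ?_⟩
  · rw [Matrix.mulVec_smul, ← Matrix.toLin'_apply, hgu]
  · rw [map_smul, map_smul, LinearMap.smul_apply, smul_smul, ← sq, hc, smul_eq_mul]
    field_simp

/- A fixed vector of norm `-1` can be moved to `e 3`, whose stabilizer is `SL₃(K)`; there the
usual diagonalization applies. -/
theorem exists_isConjIn_torusGL_of_pow_eq_one (hg : g ∈ isogenyDomain K) (hgn : g ^ n = 1)
    (hn : (n : K) ≠ 0) : ∃ y z, IsConjIn (isogenyDomain K) g (torusGL y z) := by
  obtain ⟨v, hgv, hv⟩ := exists_mulVec_eq_self_form_eq_neg_one hg hgn hn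
  obtain ⟨x, hx, hxv⟩ := sameOrbit_e3 hv
  have hk : x * g * x⁻¹ ∈ crossAut K :=
    isogenyDomain_le_crossAut (mul_mem (mul_mem hx hg) (inv_mem hx))
  have hkn : (x * g * x⁻¹) ^ n = 1 := by rw [conj_pow, hgn]; group
  have hk₃ : (x * g * x⁻¹).val *ᵥ e 3 = e 3 := by
    rw [Units.val_mul, Units.val_mul, ← Matrix.mulVec_mulVec, ← Matrix.mulVec_mulVec, ← hxv,
      inv_mulVec_mulVec, hgv]
  obtain ⟨Z, hZ⟩ := exists_actsAs hk hk₃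
  obtain ⟨Y, d, hY, hZY⟩ := exists_det_eq_one_mul_eq_mul_diagonal (hZ.pow_eq_one hkn) hn
  obtain ⟨y, z, hconj, -⟩ := hZ.isConjIn_torusGL hk hY hZY
  exact ⟨y, z, (isConjIn_conj hx g).trans hconj⟩

end Semisimple

section WeylGroup

theorem isConjIn_torusGL_inv (y z : Kˣ) :
    IsConjIn (isogenyDomain K) (torusGL y z) (torusGL y⁻¹ z⁻¹) :=
  .symm ⟨upsGL, upsGL_mem_isogenyDomain, (torusGL_mul_upsGL y z).symm⟩

variable [CharP K 3]

theorem isConjIn_torusGL_swap (y z : Kˣ) :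
    IsConjIn (isogenyDomain K) (torusGL y z) (torusGL z y) := by
  obtain ⟨y', z', h, hd⟩ := (actsAs_torusGL y z).isConjIn_torusGL
    (d := ![(z : K), y, (y : K)⁻¹ * (z : K)⁻¹])
    (isogenyDomain_le_crossAut (torusGL_mem_isogenyDomain y z))
    (Y := !![0, -1, 0; -1, 0, 0; 0, 0, -1]) (by simp [Matrix.det_fin_three])
    (by ext i j; fin_cases i <;> fin_cases j <;> simp [Matrix.mul_apply, Fin.sum_univ_three])
  have hz : z = y' := Units.ext (congrFun hd 0)
  have hy : y = z' := Units.ext (congrFun hd 1)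
  rwa [← hz, ← hy] at h

theorem isConjIn_torusGL_rotate (y z : Kˣ) :
    IsConjIn (isogenyDomain K) (torusGL y z) (torusGL (y * z)⁻¹ y) := by
  obtain ⟨y', z', h, hd⟩ := (actsAs_torusGL y z).isConjIn_torusGL
    (d := ![(y : K)⁻¹ * (z : K)⁻¹, y, z])
    (isogenyDomain_le_crossAut (torusGL_mem_isogenyDomain y z))
    (Y := !![0, 1, 0; 0, 0, 1; 1, 0, 0]) (by simp [Matrix.det_fin_three])
    (by ext i j; fin_cases i <;> fin_cases j <;> simp [Matrix.mul_apply, Fin.sum_univ_three])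
  have hyz : (y * z)⁻¹ = y' := Units.ext (by simpa [mul_comm] using congrFun hd 0)
  have hy : y = z' := Units.ext (congrFun hd 1)
  rwa [← hyz, ← hy] at h

end WeylGroup

section TorusTraces

/-- The sum of a unit and its inverse, in terms of which the traces on the torus are expressed. -/
def addInv (x : Kˣ) : K := x + x⁻¹

theorem addInv_inv (x : Kˣ) : addInv x⁻¹ = addInv x := by
  simp [addInv, add_comm]

theorem addInv_inj {x y : Kˣ} (h : addInv x = addInv y) : x = y ∨ x = y⁻¹ := by
  have key : ((x : K) - y) * (x * y - 1) = 0 := by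
    simp only [addInv, Units.val_inv_eq_inv_val] at h
    field_simp at h
    linear_combination h
  refine (mul_eq_zero.1 key).imp (fun hxy => Units.ext (sub_eq_zero.1 hxy)) fun hxy => ?_
  exact eq_inv_of_mul_eq_one_left (Units.ext (by simpa using sub_eq_zero.1 hxy))

theorem trace_torusGL (y z : Kˣ) :
    (torusGL y z).val.trace = 1 + addInv y + addInv z + addInv (y * z) := by
  simp [torus, Matrix.trace_diagonal, Fin.sum_univ_seven, weight, addInv]
  ring

theorem addInv_esymm_two (y z : Kˣ) :
    addInv y * addInv z + addInv z * addInv (y * z) + addInv (y * z) * addInv y =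
      (torusGL y z).val.trace + (torusGL (y * z ^ 2) (y * z⁻¹)).val.trace - 2 := by
  simp only [trace_torusGL, addInv]
  push_cast
  field_simp
  ring

theorem addInv_esymm_three (y z : Kˣ) :
    addInv y * addInv z * addInv (y * z) = (addInv y + addInv z + addInv (y * z)) ^ 2 -
      2 * (addInv y * addInv z + addInv z * addInv (y * z) + addInv (y * z) * addInv y) - 4 := by
  simp only [addInv]
  push_cast
  field_simp
  ring

variable {y z y' z' : Kˣ}

theorem isConjIn_torusGL_of_addInv_eq (hy : addInv y = addInv y') (hz : addInv z = addInv z')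
    (hyz : addInv (y * z) = addInv (y' * z')) :
    IsConjIn (isogenyDomain K) (torusGL y z) (torusGL y' z') := by
  have hrefl : IsConjIn (isogenyDomain K) (torusGL y z) (torusGL y z) :=
    ⟨1, one_mem _, SemiconjBy.one_left _⟩
  have hinv := isConjIn_torusGL_inv y z
  rcases addInv_inj hy with rfl | rfl <;> rcases addInv_inj hz with rfl | rfl
  · exact hrefl
  · rcases addInv_inj hyz with h | h
    · simpa only [mul_left_cancel h] using hrefl
    · have hy' : y = y⁻¹ := mul_right_cancel (h.trans (mul_inv y z'))
      rwa [inv_inv, ← hy'] at hinv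
  · rcases addInv_inj hyz with h | h
    · simpa only [mul_right_cancel h] using hrefl
    · have hz' : z = z⁻¹ := mul_left_cancel (h.trans (mul_inv y' z))
      rwa [inv_inv, ← hz'] at hinv
  · simpa only [inv_inv] using hinv

variable [CharP K 3]

theorem isConjIn_torusGL_of_esymm_eq (hy : addInv y = addInv y')
    (h₁ : addInv y + addInv z + addInv (y * z) = addInv y' + addInv z' + addInv (y' * z'))
    (h₂ : addInv y * addInv z + addInv z * addInv (y * z) + addInv (y * z) * addInv y =
      addInv y' * addInv z' + addInv z' * addInv (y' * z') + addInv (y' * z') * addInv y') :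
    IsConjIn (isogenyDomain K) (torusGL y z) (torusGL y' z') := by
  have key : (addInv z - addInv z') * (addInv z - addInv (y' * z')) = 0 := by
    rw [← hy] at h₁ h₂
    linear_combination (addInv z + addInv y) * h₁ - h₂
  rcases mul_eq_zero.1 key with hz | hz
  · rw [sub_eq_zero] at hz
    exact isConjIn_torusGL_of_addInv_eq hy hz (by rw [hy, hz] at h₁; exact add_left_cancel h₁)
  · rw [sub_eq_zero] at hz
    have hyz : addInv (y * z) = addInv z' := by linear_combination h₁ - hy - hz
    refine (isConjIn_torusGL_of_addInv_eq (y' := y') (z' := (y' * z')⁻¹) hy ?_ ?_).trans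
      ((isConjIn_torusGL_rotate y' z').trans (isConjIn_torusGL_swap _ _)).symm
    · rw [hz, addInv_inv]
    · rw [hyz, mul_inv, mul_inv_cancel_left, addInv_inv]

theorem isConjIn_torusGL_of_trace_eq (h : (torusGL y z).val.trace = (torusGL y' z').val.trace)
    (h' : (torusGL (y * z ^ 2) (y * z⁻¹)).val.trace =
      (torusGL (y' * z' ^ 2) (y' * z'⁻¹)).val.trace) :
    IsConjIn (isogenyDomain K) (torusGL y z) (torusGL y' z') := by
  have h₁ : addInv y + addInv z + addInv (y * z) = addInv y' + addInv z' + addInv (y' * z') := by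
    rw [trace_torusGL, trace_torusGL] at h
    linear_combination h
  have h₂ := addInv_esymm_two y z
  rw [h, h', ← addInv_esymm_two] at h₂
  have h₃ := addInv_esymm_three y z
  rw [h₁, h₂, ← addInv_esymm_three] at h₃
  have key : (addInv y - addInv y') * (addInv y - addInv z') * (addInv y - addInv (y' * z')) =
      0 := by
    linear_combination addInv y ^ 2 * h₁ - addInv y * h₂ + h₃
  rcases mul_eq_zero.1 key with hy | hy
  · rcases mul_eq_zero.1 hy with hy | hy
    · exact isConjIn_torusGL_of_esymm_eq (sub_eq_zero.1 hy) h₁ h₂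
    · refine (isConjIn_torusGL_of_esymm_eq (y' := z') (z' := y') (sub_eq_zero.1 hy) ?_ ?_).trans
        (isConjIn_torusGL_swap z' y')
      · rw [h₁, mul_comm z' y']; ring
      · rw [h₂, mul_comm z' y']; ring
  · have hprod : addInv ((y' * z')⁻¹ * y') = addInv z' := by
      rw [mul_comm y' z', mul_inv, inv_mul_cancel_right, addInv_inv]
    refine (isConjIn_torusGL_of_esymm_eq (y' := (y' * z')⁻¹) (z' := y') ?_ ?_ ?_).trans
      (isConjIn_torusGL_rotate y' z').symm
    · rw [addInv_inv, sub_eq_zero.1 hy]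
    · rw [h₁, hprod, addInv_inv]; ring
    · rw [h₂, hprod, addInv_inv]; ring

theorem addInv_add_one_mul (y z : Kˣ) :
    (addInv y + 1) * (addInv z + 1) * (addInv (y * z) + 1) =
      (torusGL y z).val.trace ^ 2 + (torusGL y z).val.trace - 1 -
        (torusGL (y * z ^ 2) (y * z⁻¹)).val.trace := by
  have h₂ := addInv_esymm_two y z
  have h₃ := addInv_esymm_three y z
  have ht := trace_torusGL y z
  grind

theorem addInv_sub_one_mul (y z : Kˣ) :
    (addInv y - 1) * (addInv z - 1) * (addInv (y * z) - 1) =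
      ((torusGL y z).val.trace + 1) ^ 2 := by
  have h₂ := addInv_esymm_two y z
  have h₃ := addInv_esymm_three y z
  have ht := trace_torusGL y z
  grind

theorem addInv_eq_of_sq_eq_one {x : Kˣ} (hx : x ^ 2 = 1) : addInv x = -1 ∨ addInv x = 1 := by
  rw [sq] at hx
  rcases (Units.inv_eq_self_iff x).1 (inv_eq_of_mul_eq_one_left hx) with rfl | rfl
  · left; simp [addInv]; grind
  · right; simp [addInv]; grind

theorem sq_ne_one_of_trace_eq (φ : K →+* K)
    (hφ : φ (torusGL y z).val.trace = (torusGL (y * z ^ 2) (y * z⁻¹)).val.trace)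
    (hφ' : φ (torusGL (y * z ^ 2) (y * z⁻¹)).val.trace = (torusGL y z).val.trace ^ 3)
    (h₁ : (torusGL y z).val.trace ≠ 1) (h₂ : (torusGL y z).val.trace ≠ -1) :
    y ^ 2 ≠ 1 ∧ z ^ 2 ≠ 1 ∧ (y * z) ^ 2 ≠ 1 := by
  have hadd := addInv_add_one_mul y z
  have hsub := addInv_sub_one_mul y z
  set τ := (torusGL y z).val.trace
  set σ := (torusGL (y * z ^ 2) (y * z⁻¹)).val.trace
  have hσ : τ ^ 2 + τ - 1 - σ ≠ 0 := by
    intro h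
    have h' := congrArg φ h
    simp only [map_sub, map_add, map_pow, map_one, map_zero, hφ, hφ'] at h'
    have key : (τ - 1) ^ 3 * (τ + 1) = 0 := by grind
    exact mul_ne_zero (pow_ne_zero 3 (sub_ne_zero.2 h₁)) (mt eq_neg_of_add_eq_zero_left h₂) key
  have hτ : (τ + 1) ^ 2 ≠ 0 := pow_ne_zero 2 fun h => h₂ (eq_neg_of_add_eq_zero_left h)
  rw [← hadd] at hσ
  rw [← hsub] at hτ
  refine ⟨?_, ?_, ?_⟩ <;>
  · intro h
    rcases addInv_eq_of_sq_eq_one h with h | h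
    · simp [h] at hσ
    · simp [h] at hτ

theorem weight_injective_of_trace_eq (φ : K →+* K)
    (hφ : φ (torusGL y z).val.trace = (torusGL (y * z ^ 2) (y * z⁻¹)).val.trace)
    (hφ' : φ (torusGL (y * z ^ 2) (y * z⁻¹)).val.trace = (torusGL y z).val.trace ^ 3)
    (h₁ : (torusGL y z).val.trace ≠ 1) (h₂ : (torusGL y z).val.trace ≠ -1) :
    Function.Injective (weight y z) := by
  have htorus : torusGL (y * z ^ 2 * (y * z⁻¹) ^ 2) (y * z ^ 2 * (y * z⁻¹)⁻¹) =
      torusGL (y ^ 3) (z ^ 3) := by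
    congr 1 <;> (ext; push_cast; field_simp)
  have htrace : (torusGL (y ^ 3) (z ^ 3)).val.trace = (torusGL y z).val.trace ^ 3 := by
    simp only [trace_torusGL, addInv, add_pow_char, one_pow, ← mul_pow, ← inv_pow,
      ← Units.val_pow_eq_pow_val]
  have hne {c : K} (hc : φ c = c) (h : (torusGL y z).val.trace ≠ c) :
      (torusGL (y * z ^ 2) (y * z⁻¹)).val.trace ≠ c := by
    rwa [← hφ, Ne, ← hc, φ.injective.eq_iff]
  obtain ⟨hy, hz, hyz⟩ := sq_ne_one_of_trace_eq φ hφ hφ' h₁ h₂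
  obtain ⟨hy', hz', hyz'⟩ := sq_ne_one_of_trace_eq (y := y * z ^ 2) (z := y * z⁻¹) φ
    (by rw [hφ', htorus, htrace]) (by rw [htorus, htrace, map_pow, hφ])
    (hne φ.map_one h₁) (hne (by simp) h₂)
  simp only [ne_eq, Units.ext_iff, Units.val_pow_eq_pow_val, Units.val_mul, Units.val_one,
    Units.val_inv_eq_inv_val] at hy hz hyz hy' hz' hyz'
  have hy₀ := y.ne_zero
  have hz₀ := z.ne_zero
  intro i j hij
  have hij' := congrArg Units.val hij
  by_contra h
  fin_cases i <;> fin_cases j <;>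
    first
    | exact h rfl
    | simp only [weight, Fin.zero_eta, Fin.mk_one, Fin.reduceFinMk, Matrix.cons_val, Units.val_mul,
        Units.val_one, Units.val_inv_eq_inv_val, mul_inv] at hij'
      clear hij h hφ hφ' h₁ h₂ htorus htrace hne
      grind

end TorusTraces

section Monomials

theorem exists_zpow_eq [IsAlgClosed K] {n : ℤ} (hn : n ≠ 0) (p : Kˣ) : ∃ u : Kˣ, u ^ n = p := by
  obtain ⟨u, hu⟩ := IsAlgClosed.exists_pow_nat_eq (p : K) (Int.natAbs_pos.2 hn)
  have hu₀ : u ≠ 0 := by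
    rintro rfl
    exact p.ne_zero (by rw [← hu, zero_pow (Int.natAbs_ne_zero.2 hn)])
  have hpow : Units.mk0 u hu₀ ^ n.natAbs = p := Units.ext (by simpa using hu)
  rcases n.natAbs_eq with h | h
  · exact ⟨Units.mk0 u hu₀, by rw [h, zpow_natCast, hpow]⟩
  · exact ⟨(Units.mk0 u hu₀)⁻¹, by rw [h, _root_.zpow_neg, _root_.inv_zpow, inv_inv, zpow_natCast,
      hpow]⟩

theorem exists_zpow_mul_zpow_eq [IsAlgClosed K] {a b c d : ℤ} (h : a * d - b * c ≠ 0) (p s : Kˣ) :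
    ∃ y z : Kˣ, y ^ a * z ^ b = p ∧ y ^ c * z ^ d = s := by
  obtain ⟨u, rfl⟩ := exists_zpow_eq h p
  obtain ⟨v, rfl⟩ := exists_zpow_eq h s
  refine ⟨u ^ d * v ^ (-b), u ^ (-c) * v ^ a, ?_, ?_⟩ <;>
  · simp only [mul_zpow, ← _root_.zpow_mul]
    rw [mul_mul_mul_comm, ← _root_.zpow_add, ← _root_.zpow_add]
    ring_nf
    simp

theorem exists_weight_eq_zpow_mul_zpow (i : Fin 7) :
    ∃ k l : ℤ, ∀ y z : Kˣ, weight y z i = y ^ k * z ^ l := by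
  refine ⟨![1, 1, 0, 0, 0, -1, -1] i, ![1, 0, 1, 0, -1, 0, -1] i, fun y z => ?_⟩
  fin_cases i <;> simp [weight, mul_comm]

end Monomials

section DiagonalMatrices

variable {n R : Type*} [Fintype n] [DecidableEq n] [CommRing R]

theorem exists_mul_diagonal_eq_diagonal_comp_mul [IsDomain R] {N : Matrix n n R} (hN : IsUnit N)
    {f r : n → R} (hf : Function.Injective f)
    (h : N * Matrix.diagonal f = Matrix.diagonal r * N) :
    ∃ κ : n → n, ∀ d : n → R, N * Matrix.diagonal d = Matrix.diagonal (d ∘ κ) * N := by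
  have entry {i j : n} (hij : N i j ≠ 0) : r i = f j := by
    have := congrFun (congrFun h i) j
    rw [Matrix.mul_diagonal, Matrix.diagonal_mul, mul_comm] at this
    exact (mul_right_cancel₀ hij this).symm
  have hrow (i : n) : ∃ j, N i j ≠ 0 := by
    by_contra! hi
    have hdet : N.det = 0 := Matrix.det_eq_zero_of_row_eq_zero i hi
    exact ((Matrix.isUnit_iff_isUnit_det N).1 hN).ne_zero hdet
  choose κ hκ using hrow
  refine ⟨κ, fun d => Matrix.ext fun i j => ?_⟩
  rw [Matrix.mul_diagonal, Matrix.diagonal_mul, Function.comp_apply]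
  by_cases hij : N i j = 0
  · rw [hij, zero_mul, mul_zero]
  · rw [hf ((entry hij).symm.trans (entry (hκ i))), mul_comm]

theorem exists_eq_diagonal_of_commute [IsDomain R] {M : Matrix n n R} {f : n → R}
    (hf : Function.Injective f) (h : Commute M (Matrix.diagonal f)) :
    ∃ d, M = Matrix.diagonal d := by
  refine ⟨fun i => M i i, Matrix.ext fun i j => ?_⟩
  by_cases hij : i = j
  · subst hij; simp
  · rw [Matrix.diagonal_apply_ne _ hij]
    have := congrFun (congrFun h i) j
    rw [Matrix.mul_diagonal, Matrix.diagonal_mul, mul_comm] at this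
    by_contra hM
    exact hij (hf (mul_right_cancel₀ hM this)).symm

end DiagonalMatrices

section Lang

theorem exists_eq_torusGL_of_eq_diagonal {g : GL (Fin 7) K} (hg : g ∈ crossAut K) {d : Fin 7 → K}
    (h : g.val = Matrix.diagonal d) : ∃ y z, g = torusGL y z := by
  have he (i : Fin 7) : g.val *ᵥ e i = d i • e i := by
    rw [h, Matrix.diagonal_mulVec_single, ← Pi.single_smul, smul_eq_mul]
  exact exists_eq_torusGL hg (he 1) (he 2) (he 6)

theorem weight_map (φ : K →+* K) (y z : Kˣ) :
    weight (Units.map (φ : K →* K) y) (Units.map (φ : K →* K) z) =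
      Units.map (φ : K →* K) ∘ weight y z := by
  ext i; fin_cases i <;> simp [weight]

theorem snd_mem_isogenyDomain [CharP K 3] {p : GL (Fin 7) K × GL (Fin 7) K}
    (hp : p ∈ isogenyGraph K) : p.2 ∈ isogenyDomain K :=
  ⟨_, snd_frobenius_mem_isogenyGraph hp, rfl⟩

theorem torusGL_mem_isogenyGraph (y z : Kˣ) :
    (torusGL y z, torusGL (y * z ^ 2) (y * z⁻¹)) ∈ isogenyGraph K :=
  (IsogenyGenerator.torus y z).mem_isogenyGraph

theorem semiconjBy_snd_of_mem_isogenyGraph [CharP K 3] {p q r : GL (Fin 7) K × GL (Fin 7) K}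
    (hp : p ∈ isogenyGraph K) (hq : q ∈ isogenyGraph K) (hr : r ∈ isogenyGraph K)
    (h : SemiconjBy p.1 q.1 r.1) : SemiconjBy p.2 q.2 r.2 :=
  isogenyGraph_snd_unique (g := p.1 * q.1) (mul_mem hp hq) (by rw [h.eq]; exact mul_mem hr hp)

variable [CharP K 3] [IsAlgClosed K] {φ : K →+* K} {N : ℕ}

/- On exponents of monomials the isogeny `(a, b) ↦ (a b², a b⁻¹)` has determinant `-3` while `φ` is
divisible by nine, so the equation is solvable whatever the permutation `κ` of the weights. -/
theorem exists_twisted_torus_eq (hφ : ∀ x, φ x = x ^ N) (hN : 9 ∣ N) {n : GL (Fin 7) K}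
    (hn : n ∈ crossAut K) {κ : Fin 7 → Fin 7}
    (hκ : ∀ d, n.val * Matrix.diagonal d = Matrix.diagonal (d ∘ κ) * n.val) (p s : Kˣ) :
    ∃ a b : Kˣ, torusGL (a * b ^ 2) (a * b⁻¹) * n =
      n * torusGL p s * GeneralLinearGroup.map φ (torusGL a b) := by
  obtain ⟨N, rfl⟩ := hN
  obtain ⟨k, l, h₁⟩ := exists_weight_eq_zpow_mul_zpow (K := K) (κ 1)
  obtain ⟨k', l', h₂⟩ := exists_weight_eq_zpow_mul_zpow (K := K) (κ 2)
  obtain ⟨a, b, ha, hb⟩ := exists_zpow_mul_zpow_eq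
    (a := 1 - 9 * N * k) (b := 2 - 9 * N * l) (c := 1 - 9 * N * k') (d := -1 - 9 * N * l')
    (by ring_nf; omega) (weight p s (κ 1)) (weight p s (κ 2))
  set A := p * a ^ (9 * N)
  set B := s * b ^ (9 * N)
  have hmap : torusGL p s * GeneralLinearGroup.map φ (torusGL a b) = torusGL A B := by
    have hφ' (x : Kˣ) : Units.map (φ : K →* K) x = x ^ (9 * N) := Units.ext (by simp [hφ])
    rw [map_torusGL, torusGL_mul, hφ', hφ']
  have hdiag : (n * torusGL A B * n⁻¹).val =
      Matrix.diagonal ((fun i => (weight A B i : K)) ∘ κ) := by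
    rw [Units.val_mul, Units.val_mul, coe_torusGL, torus, hκ, mul_assoc, ← Units.val_mul,
      mul_inv_cancel, Units.val_one, mul_one]
  have hcr : n * torusGL A B * n⁻¹ ∈ crossAut K := mul_mem
    (mul_mem hn (isogenyDomain_le_crossAut (torusGL_mem_isogenyDomain A B))) (inv_mem hn)
  obtain ⟨u, v, huv⟩ := exists_eq_torusGL_of_eq_diagonal hcr hdiag
  have hweight (i : Fin 7) : weight u v i = weight A B (κ i) := Units.ext <| by
    rw [huv] at hdiag
    exact congrFun (Matrix.diagonal_injective hdiag) i
  have hzpow {k l e f : ℤ} (h : a ^ (e - 9 * N * k) * b ^ (f - 9 * N * l) = p ^ k * s ^ l) :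
      A ^ k * B ^ l = a ^ e * b ^ f := by
    simp only [A, B, mul_zpow, ← zpow_natCast, ← _root_.zpow_mul]
    rw [mul_mul_mul_comm, ← h, mul_mul_mul_comm, ← _root_.zpow_add, ← _root_.zpow_add]
    push_cast
    rw [sub_add_cancel, sub_add_cancel]
  have hu : u = a * b ^ 2 := by
    refine (hweight 1).trans ?_
    rw [h₁, hzpow (ha.trans (h₁ p s)), zpow_one, zpow_ofNat]
  have hv : v = a * b⁻¹ := by
    refine (hweight 2).trans ?_
    rw [h₂, hzpow (hb.trans (h₂ p s)), zpow_one, _root_.zpow_neg_one]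
  refine ⟨a, b, ?_⟩
  rw [mul_assoc n, hmap, ← hu, ← hv, ← huv, inv_mul_cancel_right]

theorem exists_torusGL_mul_eq_mul_map_torusGL (hφ : ∀ x, φ x = x ^ N) (hN : 9 ∣ N)
    {n n' : GL (Fin 7) K} (hn : n ∈ crossAut K) (hn' : n' ∈ crossAut K) {y z y' z' : Kˣ}
    (hyz : Function.Injective (weight y z))
    (h : SemiconjBy n (torusGL y z) (torusGL y' z'))
    (h' : SemiconjBy n' (torusGL y z) (torusGL y' z')) :
    ∃ a b : Kˣ, torusGL (a * b ^ 2) (a * b⁻¹) * n =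
      n' * GeneralLinearGroup.map φ (torusGL a b) := by
  have hf : Function.Injective fun i => (weight y z i : K) := Units.val_injective.comp hyz
  obtain ⟨κ, hκ⟩ := exists_mul_diagonal_eq_diagonal_comp_mul n.isUnit hf (congrArg Units.val h.eq)
  obtain ⟨d, hd⟩ := exists_eq_diagonal_of_commute hf
    (congrArg Units.val (h.inv_symm_left.mul_left h').eq)
  obtain ⟨p, s, hps⟩ := exists_eq_torusGL_of_eq_diagonal (mul_mem (inv_mem hn) hn') hd
  obtain ⟨a, b, hab⟩ := exists_twisted_torus_eq hφ hN hn hκ p s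
  exact ⟨a, b, by rw [hab, ← hps, mul_inv_cancel_left]⟩

theorem exists_mem_isogenyGraph_semiconjBy (hφ : ∀ x, φ x = x ^ N) (hN : 9 ∣ N)
    {g h : GL (Fin 7) K} (hg : (g, GeneralLinearGroup.map φ g) ∈ isogenyGraph K)
    (hh : (h, GeneralLinearGroup.map φ h) ∈ isogenyGraph K) {y z : Kˣ}
    (hyz : Function.Injective (weight y z)) (hgS : IsConjIn (isogenyDomain K) g (torusGL y z))
    (hhS : IsConjIn (isogenyDomain K) h (torusGL y z)) :
    ∃ x, (x, GeneralLinearGroup.map φ x) ∈ isogenyGraph K ∧ SemiconjBy x g h := by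
  obtain ⟨_, ⟨p, hp, rfl⟩, hpg⟩ := hgS
  obtain ⟨_, ⟨q, hq, rfl⟩, hqh⟩ := hhS
  have hcr {p : GL (Fin 7) K × GL (Fin 7) K} (hp : p ∈ isogenyGraph K) :
      p.2 * (GeneralLinearGroup.map φ p.1)⁻¹ ∈ crossAut K :=
    isogenyDomain_le_crossAut (mul_mem (snd_mem_isogenyDomain hp)
      (inv_mem ⟨_, map_mem_isogenyGraph φ hp, rfl⟩))
  have hsemi {p : GL (Fin 7) K × GL (Fin 7) K} (hp : p ∈ isogenyGraph K) {g : GL (Fin 7) K}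
      (hg : (g, GeneralLinearGroup.map φ g) ∈ isogenyGraph K)
      (hpg : SemiconjBy p.1 g (torusGL y z)) :
      SemiconjBy (p.2 * (GeneralLinearGroup.map φ p.1)⁻¹) (torusGL (Units.map φ y) (Units.map φ z))
        (torusGL (y * z ^ 2) (y * z⁻¹)) := by
    rw [← map_torusGL]
    exact (semiconjBy_snd_of_mem_isogenyGraph hp hg (torusGL_mem_isogenyGraph y z) hpg).mul_left
      (hpg.map (GeneralLinearGroup.map φ)).inv_symm_left
  obtain ⟨a, b, hab⟩ := exists_torusGL_mul_eq_mul_map_torusGL hφ hN (hcr hp) (hcr hq)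
    (weight_map φ y z ▸ (Units.map_injective φ.injective).comp hyz) (hsemi hp hg hpg)
    (hsemi hq hh hqh)
  have hx : (q.1⁻¹ * torusGL a b * p.1, q.2⁻¹ * torusGL (a * b ^ 2) (a * b⁻¹) * p.2) ∈
      isogenyGraph K := mul_mem (mul_mem (inv_mem hq) (torusGL_mem_isogenyGraph a b)) hp
  have hsnd : GeneralLinearGroup.map φ (q.1⁻¹ * torusGL a b * p.1) =
      q.2⁻¹ * torusGL (a * b ^ 2) (a * b⁻¹) * p.2 := by
    rw [map_mul, map_mul, map_inv, eq_inv_mul_of_mul_eq hab.symm]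
    group
  have hcomm : Commute (torusGL a b) (torusGL y z) := by
    rw [Commute, SemiconjBy, torusGL_mul, torusGL_mul, mul_comm a, mul_comm b]
  exact ⟨q.1⁻¹ * torusGL a b * p.1, hsnd ▸ hx,
    (hqh.inv_symm_left.mul_left hcomm).mul_left hpg⟩

end Lang

section Descent

variable {L : Type*} [Field L] (f : K →+* L)

theorem comp_cross (u v : Fin 7 → K) : f ∘ cross u v = cross (f ∘ u) (f ∘ v) := by
  ext i
  fin_cases i <;> simp [cross]

theorem comp_outer (c v : Fin 7 → K) : f ∘ outer c v = outer (f ∘ c) (f ∘ v) := by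
  ext i
  fin_cases i <;> simp [outer]

theorem map_GL_injective {n : Type*} [Fintype n] [DecidableEq n] :
    Function.Injective (GeneralLinearGroup.map (n := n) f) :=
  Units.map_injective (Matrix.map_injective f.injective)

theorem map_GL_iterateFrobenius_comm [CharP K 3] [CharP L 3] (k : ℕ) (g : GL (Fin 7) K) :
    GeneralLinearGroup.map f (GeneralLinearGroup.map (iterateFrobenius K 3 k) g) =
      GeneralLinearGroup.map (iterateFrobenius L 3 k) (GeneralLinearGroup.map f g) := by
  ext i j
  simp [iterateFrobenius_def]

theorem exists_map_GL_eq {n : Type*} [Fintype n] [DecidableEq n] {g : GL n L}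
    (hg : ∀ i j, g i j ∈ f.range) : ∃ g₀, GeneralLinearGroup.map f g₀ = g := by
  choose A hA using hg
  have hmap : (Matrix.of A).map f = g := Matrix.ext hA
  have hdet : (Matrix.of A).det ≠ 0 := by
    rw [← (map_ne_zero f), RingHom.map_det, RingHom.mapMatrix_apply, hmap]
    exact g.det_ne_zero
  exact ⟨.mkOfDetNeZero (Matrix.of A) hdet, Units.ext hmap⟩

theorem mem_crossAut_of_map_mem {g : GL (Fin 7) K}
    (hg : GeneralLinearGroup.map f g ∈ crossAut L) : g ∈ crossAut K := by
  intro u v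
  apply f.injective.comp_left
  simp only [comp_mulVec, comp_cross, mulVec_cross hg]

theorem exists_comp_eq_of_cross_eq {w : Fin 7 → L} {T : (Fin 7 → K) → Fin 7 → K}
    (h : ∀ v, cross w (f ∘ v) = f ∘ T v) : ∃ w₀, f ∘ w₀ = w := by
  have key (i j : Fin 7) := congrFun (h (e j)) i
  suffices ∀ i, ∃ a, f a = w i by
    choose w₀ hw₀ using this
    exact ⟨w₀, funext hw₀⟩
  intro i
  fin_cases i
  · exact ⟨T (e 3) 0, by simpa [cross, eq_comm] using key 0 3⟩
  · exact ⟨-T (e 3) 1, by simpa [cross, neg_eq_iff_eq_neg, eq_comm] using key 1 3⟩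
  · exact ⟨-T (e 3) 2, by simpa [cross, neg_eq_iff_eq_neg, eq_comm] using key 2 3⟩
  · exact ⟨-T (e 0) 0, by simpa [cross, neg_eq_iff_eq_neg, eq_comm] using key 0 0⟩
  · exact ⟨T (e 3) 4, by simpa [cross, eq_comm] using key 4 3⟩
  · exact ⟨T (e 3) 5, by simpa [cross, eq_comm] using key 5 3⟩
  · exact ⟨-T (e 3) 6, by simpa [cross, neg_eq_iff_eq_neg, eq_comm] using key 6 3⟩

theorem mem_compatiblePairs_of_map_mem {g h : GL (Fin 7) K}
    (hgh : (GeneralLinearGroup.map f g, GeneralLinearGroup.map f h) ∈ compatiblePairs L) :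
    (g, h) ∈ compatiblePairs K := by
  refine ⟨mem_crossAut_of_map_mem f hgh.1, fun c => ?_⟩
  obtain ⟨w, hw⟩ := hgh.2 (f ∘ c)
  have hcross (v : Fin 7 → K) : cross w (f ∘ (g.val *ᵥ v)) =
      f ∘ (g.val *ᵥ outer c v - outer (h.val *ᵥ c) (g.val *ᵥ v)) := by
    have hsub (a b : Fin 7 → K) : f ∘ (a - b) = f ∘ a - f ∘ b := funext fun i => map_sub f _ _
    rw [hsub, comp_outer, comp_mulVec f g (outer c v), comp_outer, hw, comp_mulVec,
      comp_mulVec, add_sub_cancel_left]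
  obtain ⟨w₀, rfl⟩ := exists_comp_eq_of_cross_eq f (w := w)
    (T := fun v => g.val *ᵥ outer c (g⁻¹.val *ᵥ v) - outer (h.val *ᵥ c) v)
    fun v => by simpa only [mulVec_inv_mulVec] using hcross (g⁻¹.val *ᵥ v)
  refine ⟨w₀, fun v => f.injective.comp_left ?_⟩
  have hadd (a b : Fin 7 → K) : f ∘ (a + b) = f ∘ a + f ∘ b := funext fun i => map_add f _ _
  simp only [hadd, comp_outer, comp_mulVec, comp_cross, hw]

end Descent

section FiniteField

variable {F : Type*} [Field F] [Fintype F]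

open Polynomial in
theorem mem_range_of_pow_card_eq (ι : F →+* K) {x : K}
    (hx : x ^ Fintype.card F = x) : x ∈ ι.range :=
  have hsplits : (X ^ Fintype.card F - X : F[X]).Splits := by
    simpa using (FiniteField.isSplittingField_sub F F).splits
  hsplits.mem_range_of_isRoot (FiniteField.X_pow_card_sub_X_ne_zero F Fintype.one_lt_card)
    (by simp [hx])

theorem exists_eq_sq_or_eq_neg_sq (hF : Fintype.card F % 4 = 3) (l : Fˣ) :
    ∃ u : Fˣ, l = u ^ 2 ∨ l = -u ^ 2 := by
  have hchar : ringChar F ≠ 2 := fun h => by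
    have := FiniteField.even_card_iff_char_two.1 h
    omega
  have hexp : (Fintype.card F + 1) / 4 * 2 = Fintype.card F / 2 + 1 := by omega
  refine ⟨l ^ ((Fintype.card F + 1) / 4), ?_⟩
  rw [← pow_mul, hexp, pow_succ]
  exact (FiniteField.pow_dichotomy hchar l.ne_zero).imp
    (fun h => Units.ext (by simp [h])) (fun h => Units.ext (by simp [h]))

end FiniteField

section FrobeniusTwist

variable {F : Type*} [Field F] [Fintype F] {m : ℕ}

theorem pow_pow_eq_pow_three (hF : Fintype.card F = 3 ^ (2 * m + 1)) (x : F) :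
    (x ^ 3 ^ (m + 1)) ^ 3 ^ (m + 1) = x ^ 3 := by
  rw [← pow_mul, ← pow_add, show m + 1 + (m + 1) = 2 * m + 1 + 1 by ring, pow_succ, pow_mul, ← hF,
    FiniteField.pow_card]

variable [CharP F 3]

theorem twist_iterateFrobenius (hF : Fintype.card F = 3 ^ (2 * m + 1)) :
    Twist (3 ^ m) (iterateFrobenius F 3 (m + 1)) where
  cube x := by rw [iterateFrobenius_def, ← pow_mul, pow_succ]
  root x := by
    rw [iterateFrobenius_def, ← pow_mul, ← pow_add, show m + (m + 1) = 2 * m + 1 by ring, ← hF,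
      FiniteField.pow_card]

variable [CharP K 3] (ι : F →+* K)

theorem map_mem_isogenyGraph_of_mem_reeGroup (hF : Fintype.card F = 3 ^ (2 * m + 1))
    {g : GL (Fin 7) F} (hg : g ∈ ReeGroup (3 ^ m)) :
    (GeneralLinearGroup.map ι g, GeneralLinearGroup.map (iterateFrobenius K 3 (m + 1))
      (GeneralLinearGroup.map ι g)) ∈ isogenyGraph K := by
  rw [← map_GL_iterateFrobenius_comm]
  exact map_mem_isogenyGraph ι (reeGroup_le_isogenyGraph (twist_iterateFrobenius hF) hg)

theorem exists_mem_reeGroup_map_eq (hF : Fintype.card F = 3 ^ (2 * m + 1)) {x : GL (Fin 7) K}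
    (hx : (x, GeneralLinearGroup.map (iterateFrobenius K 3 (m + 1)) x) ∈ isogenyGraph K) :
    ∃ x₀ ∈ ReeGroup (3 ^ m), GeneralLinearGroup.map ι x₀ = x := by
  have hsnd := isogenyGraph_snd_unique (snd_frobenius_mem_isogenyGraph hx)
    (map_mem_isogenyGraph (iterateFrobenius K 3 (m + 1)) hx)
  have hcard (i j : Fin 7) : x i j ^ Fintype.card F = x i j := by
    have hij : x i j ^ 3 = (x i j ^ 3 ^ (m + 1)) ^ 3 ^ (m + 1) := by
      simpa [frobenius_def, iterateFrobenius_def] using congrArg (fun g => g.val i j) hsnd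
    refine frobenius_inj K 3 ?_
    rw [frobenius_def, frobenius_def, hij, hF, ← pow_mul, ← pow_mul, ← pow_add, ← pow_succ]
    congr 2
    ring
  obtain ⟨x₀, rfl⟩ := exists_map_GL_eq ι fun i j => mem_range_of_pow_card_eq ι (hcard i j)
  refine ⟨x₀, ?_, rfl⟩
  rw [← twistedFixed_eq_reeGroup (twist_iterateFrobenius hF)]
  rw [← map_GL_iterateFrobenius_comm] at hx
  exact mem_compatiblePairs_of_map_mem ι (isogenyGraph_le_compatiblePairs hx)

end FrobeniusTwist

section Trace

theorem trace_eq_of_semiconjBy {n : Type*} [Fintype n] [DecidableEq n] {x g h : GL n K}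
    (hx : SemiconjBy x g h) : g.val.trace = h.val.trace := by
  rw [← mul_inv_eq_of_eq_mul hx.eq, Units.val_mul, Matrix.trace_mul_comm, ← Units.val_mul,
    inv_mul_cancel_left]

theorem trace_map_GL {L n : Type*} [Field L] [Fintype n] [DecidableEq n] (f : K →+* L)
    (g : GL n K) : (GeneralLinearGroup.map f g).val.trace = f g.val.trace :=
  (AddMonoidHom.map_trace f g.val).symm

variable [CharP K 3]

theorem trace_snd_eq_of_isConjIn_torusGL {g g' : GL (Fin 7) K} (hg : (g, g') ∈ isogenyGraph K)
    {y z : Kˣ} (h : IsConjIn (isogenyDomain K) g (torusGL y z)) :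
    g'.val.trace = (torusGL (y * z ^ 2) (y * z⁻¹)).val.trace := by
  obtain ⟨_, ⟨p, hp, rfl⟩, hpg⟩ := h
  exact trace_eq_of_semiconjBy
    (semiconjBy_snd_of_mem_isogenyGraph hp hg (torusGL_mem_isogenyGraph y z) hpg)

theorem isConjIn_torusGL_of_isConjIn_of_trace_eq {g g' : GL (Fin 7) K}
    (hg : (g, g') ∈ isogenyGraph K) {y z y' z' : Kˣ}
    (hyz : IsConjIn (isogenyDomain K) g (torusGL y z))
    (h : g.val.trace = (torusGL y' z').val.trace)
    (h' : g'.val.trace = (torusGL (y' * z' ^ 2) (y' * z'⁻¹)).val.trace) :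
    IsConjIn (isogenyDomain K) g (torusGL y' z') := by
  rw [trace_snd_eq_of_isConjIn_torusGL hg hyz] at h'
  obtain ⟨x, -, hx⟩ := id hyz
  rw [trace_eq_of_semiconjBy hx] at h
  exact hyz.trans (isConjIn_torusGL_of_trace_eq h h')

end Trace

section Conjugacy

variable {F : Type*} [Field F] [Fintype F] [CharP F 3] {m : ℕ}
variable [IsAlgClosed K] [CharP K 3] (ι : F →+* K)

theorem exists_isConjIn_torusGL_of_mem_reeGroup (hF : Fintype.card F = 3 ^ (2 * m + 1))
    {g : GL (Fin 7) F} (hg : g ∈ ReeGroup (3 ^ m)) (hord : (orderOf g).Coprime 3) :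
    ∃ y z, IsConjIn (isogenyDomain K) (GeneralLinearGroup.map ι g) (torusGL y z) := by
  refine exists_isConjIn_torusGL_of_pow_eq_one (n := orderOf g)
    ⟨_, map_mem_isogenyGraph_of_mem_reeGroup ι hF hg, rfl⟩ ?_ ?_
  · rw [← map_pow, pow_orderOf_eq_one, map_one]
  · rw [Ne, CharP.cast_eq_zero_iff K 3]
    exact (Nat.prime_three.coprime_iff_not_dvd).1 hord.symm

theorem isConjIn_torusGL_of_trace_mem_reeGroup (hF : Fintype.card F = 3 ^ (2 * m + 1))
    {g : GL (Fin 7) F} (hg : g ∈ ReeGroup (3 ^ m)) (hord : (orderOf g).Coprime 3) {y z : Kˣ}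
    (h : ι g.val.trace = (torusGL y z).val.trace)
    (h' : ι g.val.trace ^ 3 ^ (m + 1) = (torusGL (y * z ^ 2) (y * z⁻¹)).val.trace) :
    IsConjIn (isogenyDomain K) (GeneralLinearGroup.map ι g) (torusGL y z) := by
  obtain ⟨y', z', hyz⟩ := exists_isConjIn_torusGL_of_mem_reeGroup ι hF hg hord
  refine isConjIn_torusGL_of_isConjIn_of_trace_eq (map_mem_isogenyGraph_of_mem_reeGroup ι hF hg) hyz
    ?_ ?_
  · rw [trace_map_GL, h]
  · rw [trace_map_GL, trace_map_GL, iterateFrobenius_def, h']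

end Conjugacy

section ReeConjugacy

variable {F : Type*} [Field F] [Fintype F] [CharP F 3] {m : ℕ} {g h : GL (Fin 7) F}

theorem eq_one_of_trace_eq_one (hF : Fintype.card F = 3 ^ (2 * m + 1)) (hg : g ∈ ReeGroup (3 ^ m))
    (hord : (orderOf g).Coprime 3) (htr : g.val.trace = 1) : g = 1 := by
  let ι := algebraMap F (AlgebraicClosure F)
  have htorus : 1 = (torusGL (1 : (AlgebraicClosure F)ˣ) 1).val.trace := by
    rw [trace_torusGL]
    simp [addInv]
    grind
  obtain ⟨x, -, hx⟩ := isConjIn_torusGL_of_trace_mem_reeGroup ι hF hg hord (y := 1) (z := 1)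
    (by simpa [htr] using htorus) (by simpa [htr] using htorus)
  rw [torusGL_one_one] at hx
  exact map_GL_injective ι (by simpa [SemiconjBy] using hx)

theorem mul_self_eq_one_of_trace_eq_neg_one (hF : Fintype.card F = 3 ^ (2 * m + 1))
    (hg : g ∈ ReeGroup (3 ^ m)) (hord : (orderOf g).Coprime 3) (htr : g.val.trace = -1) :
    g * g = 1 := by
  let ι := algebraMap F (AlgebraicClosure F)
  have htorus : -1 = (torusGL (1 : (AlgebraicClosure F)ˣ) (-1)).val.trace := by
    rw [trace_torusGL]
    simp [addInv]
    grind
  obtain ⟨x, -, hx⟩ := isConjIn_torusGL_of_trace_mem_reeGroup ι hF hg hord (y := 1) (z := -1)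
    (by simpa [htr] using htorus)
    (by simpa [htr, (Odd.pow (by decide : Odd 3)).neg_one_pow] using htorus)
  have hxx := hx.mul_right hx
  rw [torusGL_mul, mul_one, neg_one_mul, neg_neg, torusGL_one_one] at hxx
  exact map_GL_injective ι (by simpa [SemiconjBy] using hxx)

theorem isConjIn_reeGroup_of_trace_eq_neg_one (hF : Fintype.card F = 3 ^ (2 * m + 1))
    (hg : g ∈ ReeGroup (3 ^ m)) (hord : (orderOf g).Coprime 3) (htr : g.val.trace = -1) :
    IsConjIn (ReeGroup (3 ^ m)) g (torusGL 1 (-1)) := by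
  have hmod : Fintype.card F % 4 = 3 := by
    rw [hF, pow_succ, pow_mul, Nat.mul_mod, Nat.pow_mod]
    norm_num
  refine isConjIn_torusGL_of_mul_self (twist_iterateFrobenius hF) (Odd.pow (by decide))
    (exists_eq_sq_or_eq_neg_sq hmod) hg (mul_self_eq_one_of_trace_eq_neg_one hF hg hord htr) ?_
  rintro rfl
  rw [Units.val_one, Matrix.trace_one, Fintype.card_fin] at htr
  have := CharP.cast_eq_zero F 3
  grind

theorem isConjIn_reeGroup_of_trace_eq (hm : 0 < m) (hF : Fintype.card F = 3 ^ (2 * m + 1))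
    (hg : g ∈ ReeGroup (3 ^ m)) (hh : h ∈ ReeGroup (3 ^ m)) (hgord : (orderOf g).Coprime 3)
    (hhord : (orderOf h).Coprime 3) (htr : g.val.trace = h.val.trace) (h₁ : g.val.trace ≠ 1)
    (h₂ : g.val.trace ≠ -1) : IsConjIn (ReeGroup (3 ^ m)) g h := by
  let ι := algebraMap F (AlgebraicClosure F)
  let φ := iterateFrobenius (AlgebraicClosure F) 3 (m + 1)
  obtain ⟨y, z, hgyz⟩ := exists_isConjIn_torusGL_of_mem_reeGroup ι hF hg hgord
  have hτ : ι g.val.trace = (torusGL y z).val.trace := by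
    obtain ⟨x, -, hx⟩ := id hgyz
    rw [← trace_map_GL, trace_eq_of_semiconjBy hx]
  have hσ : φ (ι g.val.trace) = (torusGL (y * z ^ 2) (y * z⁻¹)).val.trace := by
    rw [← trace_snd_eq_of_isConjIn_torusGL (map_mem_isogenyGraph_of_mem_reeGroup ι hF hg) hgyz,
      trace_map_GL, trace_map_GL]
  have hhyz : IsConjIn (isogenyDomain _) (GeneralLinearGroup.map ι h) (torusGL y z) :=
    isConjIn_torusGL_of_trace_mem_reeGroup ι hF hh hhord (htr ▸ hτ) (htr ▸ hσ)
  have hinj : Function.Injective (weight y z) := by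
    refine weight_injective_of_trace_eq φ (by rw [← hτ, hσ]) ?_ ?_ ?_
    · rw [← hσ, ← hτ]
      simp only [φ, iterateFrobenius_def, ← map_pow, pow_pow_eq_pow_three hF]
    · rwa [← hτ, Ne, map_eq_one_iff ι ι.injective]
    · rwa [← hτ, Ne, ← map_one ι, ← map_neg, ι.injective.eq_iff]
  have hdvd : 9 ∣ 3 ^ (m + 1) := pow_dvd_pow 3 (show 2 ≤ m + 1 by omega)
  obtain ⟨x, hx, hxgh⟩ := exists_mem_isogenyGraph_semiconjBy (φ := φ)
    (fun x => iterateFrobenius_def 3 (m + 1) x) hdvd (map_mem_isogenyGraph_of_mem_reeGroup ι hF hg)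
    (map_mem_isogenyGraph_of_mem_reeGroup ι hF hh) hinj hgyz hhyz
  obtain ⟨x₀, hx₀, rfl⟩ := exists_mem_reeGroup_map_eq ι hF hx
  exact ⟨x₀, hx₀, map_GL_injective ι (by simpa only [map_mul] using hxgh.eq)⟩

end ReeConjugacy

end ReePaper

/-- Elements of `Ree(q)` of order coprime to 3 with the same trace are conjugate in `Ree(q)`. -/
theorem trace_conjugacy (m : ℕ) (hm : 0 < m) (F : Type*) [Field F] [Fintype F]
    (hF : Fintype.card F = 3 ^ (2 * m + 1)) :
    ∀ g₁ g₂ : GL (Fin 7) F, g₁ ∈ ReeGroup (F := F) (3 ^ m) → g₂ ∈ ReeGroup (F := F) (3 ^ m) →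
      Nat.Coprime (orderOf g₁) 3 → Nat.Coprime (orderOf g₂) 3 →
      Matrix.trace (g₁ : Matrix (Fin 7) (Fin 7) F) = Matrix.trace (g₂ : Matrix (Fin 7) (Fin 7) F) →
      ∃ x ∈ ReeGroup (F := F) (3 ^ m), x⁻¹ * g₁ * x = g₂ := by
  intro g₁ g₂ hg₁ hg₂ hord₁ hord₂ htr
  have : CharP F 3 := charP_of_card_eq_prime_pow hF
  suffices IsConjIn (ReeGroup (3 ^ m)) g₂ g₁ by
    obtain ⟨x, hx, hconj⟩ := this
    exact ⟨x, hx, by rw [mul_assoc, ← hconj.eq, inv_mul_cancel_left]⟩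
  by_cases h₁ : g₂.val.trace = 1
  · rw [eq_one_of_trace_eq_one hF hg₁ hord₁ (htr.trans h₁), eq_one_of_trace_eq_one hF hg₂ hord₂ h₁]
    exact ⟨1, one_mem _, SemiconjBy.one_left _⟩
  by_cases h₂ : g₂.val.trace = -1
  · exact (isConjIn_reeGroup_of_trace_eq_neg_one hF hg₂ hord₂ h₂).trans
      (isConjIn_reeGroup_of_trace_eq_neg_one hF hg₁ hord₁ (htr.trans h₂)).symm
  · exact isConjIn_reeGroup_of_trace_eq hm hF hg₂ hg₁ hord₂ hord₁ htr.symm h₁ h₂
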